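/- Let G be a connected vertex-transitive non-bipartite simple graph of even order at least 6, and let k be its common vertex degree. Then G is 4-factor-critical if and only if k ≥ 5. -/

import Mathlib

open SimpleGraph

section Defs

variable {V : Type*}

/-- A simple graph is vertex-transitive if any vertex can be mapped to any other
by a graph automorphism. -/
def VertexTransitive (G : SimpleGraph V) : Prop :=
  ∀ x y : V, ∃ φ : G ≃g G, φ x = y

/-- A graph is `p`-factor-critical if the removal of any set of `p` vertices
results in a graph with a perfect matching. -/
def PFactorCritical (G : SimpleGraph V) (p : ℕ) : Prop :=
  ∀ X : Set V, X.ncard = p → ∃ M : (G.induce Xᶜ).Subgraph, M.IsPerfectMatching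

/-- A graph is factor-critical if the removal of any single vertex results in a
graph with a perfect matching. -/
def IsFactorCritical {W : Type*} (H : SimpleGraph W) : Prop :=
  ∀ v : W, ∃ M : (H.induce ({v}ᶜ : Set W)).Subgraph, M.IsPerfectMatching

/-- `∇(X)`: the set of edges of `G` with exactly one end in `X`. -/
def edgeBoundary (G : SimpleGraph V) (X : Set V) : Set (Sym2 V) :=
  {e | e ∈ G.edgeSet ∧ ∃ x ∈ X, ∃ y ∈ Xᶜ, e = s(x, y)}

/-- The set of edges of `G` with both ends in `X`. -/
def edgesWithin (G : SimpleGraph V) (X : Set V) : Set (Sym2 V) :=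
  {e | e ∈ G.edgeSet ∧ ∀ v ∈ e, v ∈ X}

/-- The set of edges of `G` with one end in `A` and the other end in `S \ A`
(i.e. the edge boundary of `A` inside the induced subgraph `G[S]` when `A ⊆ S`). -/
def inducedEdgeBoundary (G : SimpleGraph V) (S A : Set V) : Set (Sym2 V) :=
  {e | e ∈ G.edgeSet ∧ ∃ x ∈ A, ∃ y ∈ S \ A, e = s(x, y)}

/-- `F` is an `s`-restricted edge-cut of `G` if deleting `F` disconnects `G` and
every component of `G − F` has at least `s` vertices. -/
def IsRestrictedEdgeCut (G : SimpleGraph V) (s : ℕ) (F : Set (Sym2 V)) : Prop :=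
  F ⊆ G.edgeSet ∧ ¬ (G.deleteEdges F).Connected ∧
    ∀ c : (G.deleteEdges F).ConnectedComponent, s ≤ c.supp.ncard

/-- `λ_s(G)`: the minimum cardinality of an `s`-restricted edge-cut of `G`. -/
noncomputable def lambdaS (G : SimpleGraph V) (s : ℕ) : ℕ :=
  sInf (Set.ncard '' {F | IsRestrictedEdgeCut G s F})

/-- A `λ_s`-fragment: a vertex set whose edge boundary is an `s`-restricted
edge-cut of minimum cardinality `λ_s(G)`. -/
def IsLambdaFragment (G : SimpleGraph V) (s : ℕ) (X : Set V) : Prop :=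
  IsRestrictedEdgeCut G s (edgeBoundary G X) ∧ (edgeBoundary G X).ncard = lambdaS G s

/-- A `λ_s`-atom: a `λ_s`-fragment of minimum cardinality. -/
def IsLambdaAtom (G : SimpleGraph V) (s : ℕ) (X : Set V) : Prop :=
  IsLambdaFragment G s X ∧ ∀ Y : Set V, IsLambdaFragment G s Y → X.ncard ≤ Y.ncard

/-- The odd girth of `G`: the length of a shortest odd cycle of `G`. -/
noncomputable def oddGirth (G : SimpleGraph V) : ℕ :=
  sInf {n | Odd n ∧ ∃ (v : V) (c : G.Walk v v), c.IsCycle ∧ c.length = n}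

/-- `X` is an independent set of `G`. -/
def IsIndependentSet (G : SimpleGraph V) (X : Set V) : Prop :=
  ∀ x ∈ X, ∀ y ∈ X, ¬ G.Adj x y

/-- The independence number `α(G)`. -/
noncomputable def indepNum (G : SimpleGraph V) : ℕ :=
  sSup {n | ∃ X : Set V, IsIndependentSet G X ∧ X.ncard = n}

/-- The number of trivial (single-vertex) components of `G − X`. -/
noncomputable def trivialComponentCount (G : SimpleGraph V) (X : Set V) : ℕ :=
  {c : (G.induce Xᶜ).ConnectedComponent | c.supp.ncard = 1}.ncard

/-- The number of odd components of `G − X`. -/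
noncomputable def oddComponentCount (G : SimpleGraph V) (X : Set V) : ℕ :=
  {c : (G.induce Xᶜ).ConnectedComponent | Odd c.supp.ncard}.ncard

/-- The number of nontrivial components of `G − X`. -/
noncomputable def nontrivialComponentCount (G : SimpleGraph V) (X : Set V) : ℕ :=
  {c : (G.induce Xᶜ).ConnectedComponent | 2 ≤ c.supp.ncard}.ncard

/-- An imprimitive block of `G`: a proper non-empty vertex set that every
automorphism either fixes setwise or maps to a disjoint set. -/
def IsImprimitiveBlock (G : SimpleGraph V) (X : Set V) : Prop :=
  X.Nonempty ∧ X ≠ Set.univ ∧ ∀ φ : G ≃g G, (⇑φ) '' X = X ∨ ((⇑φ) '' X) ∩ X = ∅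

/-- A connected graph is `q`-extendable if it has a perfect matching and every
matching of size `q` is contained in a perfect matching. -/
def Extendable (G : SimpleGraph V) (q : ℕ) : Prop :=
  (∃ M : G.Subgraph, M.IsPerfectMatching) ∧
    ∀ M : G.Subgraph, M.IsMatching → M.edgeSet.ncard = q →
      ∃ P : G.Subgraph, P.IsPerfectMatching ∧ M ≤ P

end Defs

set_option linter.unusedSectionVars false

namespace FC
open SimpleGraph Finset

section cuts
variable {V : Type*} [Fintype V] [DecidableEq V] (G : SimpleGraph V) [DecidableRel G.Adj]

/-- Ordered number of adjacent pairs between two vertex sets. -/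
def E (X Y : Finset V) : ℕ := ∑ x ∈ X, ∑ y ∈ Y, if G.Adj x y then 1 else 0

/-- Size of the edge boundary. -/
def dd (X : Finset V) : ℕ := E G X Xᶜ

/-- Open neighbourhood of a vertex. -/
def nbv (v : V) : Finset V := univ.filter (G.Adj v)

variable {G}

@[simp] lemma mem_nbv {v w : V} : w ∈ nbv G v ↔ G.Adj v w := by simp [nbv]

lemma E_comm (X Y : Finset V) : E G X Y = E G Y X := by
  unfold E
  rw [Finset.sum_comm]
  simp only [G.adj_comm]

lemma E_eq (X Y : Finset V) : E G X Y = ∑ x ∈ X, #(nbv G x ∩ Y) := by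
  unfold E
  refine Finset.sum_congr rfl fun x _ => ?_
  rw [← Finset.card_filter]
  congr 1
  ext y; simp [and_comm]

lemma E_union_left {X X' : Finset V} (h : Disjoint X X') (Y : Finset V) :
    E G (X ∪ X') Y = E G X Y + E G X' Y := by
  unfold E; rw [Finset.sum_union h]

lemma E_union_right {Y Y' : Finset V} (h : Disjoint Y Y') (X : Finset V) :
    E G X (Y ∪ Y') = E G X Y + E G X Y' := by
  rw [E_comm, E_union_left h, E_comm, E_comm Y']

lemma E_mono {X X' Y Y' : Finset V} (h : X ⊆ X') (h' : Y ⊆ Y') : E G X Y ≤ E G X' Y' := by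
  unfold E
  calc _ ≤ ∑ x ∈ X, ∑ y ∈ Y', (if G.Adj x y then 1 else 0) :=
        Finset.sum_le_sum fun x _ => Finset.sum_le_sum_of_subset h'
    _ ≤ _ := Finset.sum_le_sum_of_subset h

lemma E_eq_zero {X Y : Finset V} (h : ∀ x ∈ X, ∀ y ∈ Y, ¬ G.Adj x y) : E G X Y = 0 := by
  unfold E
  refine Finset.sum_eq_zero fun x hx => Finset.sum_eq_zero fun y hy => ?_
  simp [h x hx y hy]

lemma E_pos {X Y : Finset V} {x y : V} (hx : x ∈ X) (hy : y ∈ Y) (h : G.Adj x y) :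
    0 < E G X Y := by
  by_contra h0
  have h0 : E G X Y = 0 := by omega
  have : E G {x} {y} ≤ E G X Y := E_mono (by simpa using hx) (by simpa using hy)
  have h1 : E G {x} {y} = 1 := by
    unfold E; rw [sum_singleton, sum_singleton, if_pos h]
  omega

lemma E_singleton (x : V) (Y : Finset V) : E G {x} Y = #(nbv G x ∩ Y) := by
  rw [E_eq]; simp

lemma E_biUnion_right {ι : Type*} [DecidableEq ι] (I : Finset ι) (f : ι → Finset V)
    (h : (I : Set ι).PairwiseDisjoint f) (X : Finset V) :
    E G X (I.biUnion f) = ∑ i ∈ I, E G X (f i) := by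
  rw [E_comm]
  unfold E
  rw [Finset.sum_biUnion h]
  refine Finset.sum_congr rfl fun i _ => ?_
  change E G (f i) X = E G X (f i)
  exact E_comm _ _

variable {k : ℕ} 

lemma card_nbv (hreg : G.IsRegularOfDegree k) (v : V) : #(nbv G v) = k := by
  have := hreg v
  rw [← this, ← G.card_neighborFinset_eq_degree]
  congr 1
  ext; simp

lemma E_univ (hreg : G.IsRegularOfDegree k) (X : Finset V) : E G X univ = k * #X := by
  rw [E_eq]
  simp [card_nbv hreg, mul_comm]

lemma E_add_compl (X Y : Finset V) : E G X Y + E G X Yᶜ = E G X univ := by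
  rw [← E_union_right disjoint_compl_right, union_compl]

lemma dd_add (hreg : G.IsRegularOfDegree k) (X : Finset V) : dd G X + E G X X = k * #X := by
  rw [← E_univ hreg, ← E_add_compl X X]; unfold dd; ring

lemma dd_compl (X : Finset V) : dd G Xᶜ = dd G X := by
  unfold dd; rw [compl_compl, E_comm]

lemma dd_eq_sum (X : Finset V) :
    dd G X = ∑ x, ∑ y, if x ∈ X ∧ y ∉ X ∧ G.Adj x y then 1 else 0 := by
  unfold dd E
  rw [← Finset.sum_filter_add_sum_filter_not univ (· ∈ X)]
  have h2 : ∑ x with x ∉ X, ∑ y, (if x ∈ X ∧ y ∉ X ∧ G.Adj x y then 1 else 0) = 0 := by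
    refine Finset.sum_eq_zero fun x hx => Finset.sum_eq_zero fun y _ => ?_
    simp at hx; simp [hx]
  rw [h2, add_zero]
  have h3 : univ.filter (· ∈ X) = X := by ext; simp
  rw [h3]
  refine Finset.sum_congr rfl fun x hx => ?_
  rw [← Finset.card_filter, ← Finset.card_filter]
  congr 1
  ext y; simp [hx]

lemma dd_submod (X Y : Finset V) : dd G (X ∩ Y) + dd G (X ∪ Y) ≤ dd G X + dd G Y := by
  simp only [dd_eq_sum, ← Finset.sum_add_distrib]
  refine Finset.sum_le_sum fun x _ => Finset.sum_le_sum fun y _ => ?_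
  simp only [mem_inter, mem_union]
  by_cases h1 : x ∈ X <;> by_cases h2 : x ∈ Y <;> by_cases h3 : y ∈ X <;> by_cases h4 : y ∈ Y <;>
    by_cases h5 : G.Adj x y <;> simp [h1, h2, h3, h4, h5]

lemma dd_posimod (X Y : Finset V) : dd G (X \ Y) + dd G (Y \ X) ≤ dd G X + dd G Y := by
  have h := dd_submod (G := G) X Yᶜ
  rw [dd_compl Y] at h
  have h1 : X ∩ Yᶜ = X \ Y := by ext; simp
  have h2 : X ∪ Yᶜ = (Y \ X)ᶜ := by ext; simp; tauto
  rw [h1, h2, dd_compl] at h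
  exact h

/-- `E X X` is even. -/
lemma E_self_even (X : Finset V) : Even (E G X X) := by
  induction X using Finset.induction_on with
  | empty => simp [E]
  | insert a s ha ih =>
    rw [insert_eq, E_union_left (by simpa using ha), E_union_right (by simpa using ha),
      E_union_right (by simpa using ha), E_comm s {a}]
    have : E G {a} {a} = 0 := by simp [E]
    rw [this]
    have h : 0 + E G {a} s + (E G {a} s + E G s s) = 2 * E G {a} s + E G s s := by ring
    rw [h]
    exact (even_two_mul _).add ih

lemma E_self_le (X : Finset V) : E G X X + #X ≤ #X * #X := by
  have : E G X X ≤ ∑ x ∈ X, (#X - 1) := by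
    rw [E_eq]
    refine Finset.sum_le_sum fun x hx => ?_
    have : nbv G x ∩ X ⊆ X.erase x := by
      intro y hy
      simp at hy
      simp [hy.2, hy.1.ne']
    calc _ ≤ #(X.erase x) := card_le_card this
      _ = _ := card_erase_of_mem hx
  rw [Finset.sum_const, smul_eq_mul] at this
  rcases X.eq_empty_or_nonempty with rfl | hX
  · simp [E]
  · have hc := hX.card_pos
    obtain ⟨m, hm⟩ : ∃ m, #X = m + 1 := ⟨#X - 1, by omega⟩
    rw [hm] at this ⊢
    rw [Nat.add_sub_cancel] at this
    nlinarith

lemma dd_pos (hconn : G.Connected) {X : Finset V} (h1 : X.Nonempty) (h2 : X ≠ univ) :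
    0 < dd G X := by
  by_contra h0
  have h0 : dd G X = 0 := by omega
  have hcl : ∀ x y, G.Adj x y → x ∈ X → y ∈ X := by
    intro x y hxy hx
    by_contra hy
    have := E_pos hx (by simpa using hy : y ∈ Xᶜ) hxy
    unfold dd at h0; omega
  obtain ⟨x, hx⟩ := h1
  apply h2
  ext y
  simp only [mem_univ, iff_true]
  obtain ⟨w⟩ := hconn.preconnected x y
  induction w with
  | nil => exact hx
  | cons h _ ih => exact ih (hcl _ _ h hx)

lemma closed_eq_univ (hconn : G.Connected) {X : Finset V} (h1 : X.Nonempty)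
    (hcl : ∀ x ∈ X, ∀ y, G.Adj x y → y ∈ X) : X = univ := by
  by_contra h2
  have := dd_pos hconn h1 h2
  unfold dd at this
  rw [E_eq_zero] at this
  · omega
  · intro x hx y hy h
    simp at hy
    exact hy (hcl x hx y h)

lemma card_compl_add (X : Finset V) : #Xᶜ + #X = Fintype.card V := by
  rw [card_compl]; have := card_le_univ X; omega

end cuts

/-! ### automorphisms of relations, blocks -/
section aut
variable {V : Type*} [Fintype V] [DecidableEq V]

def AutR (R : V → V → Prop) (φ : Equiv.Perm V) : Prop := ∀ a b, R (φ a) (φ b) ↔ R a b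

def TransR (R : V → V → Prop) : Prop := ∀ x y, ∃ φ : Equiv.Perm V, AutR R φ ∧ φ x = y

abbrev mp (φ : Equiv.Perm V) (X : Finset V) : Finset V := X.map φ.toEmbedding

lemma AutR.symm {R : V → V → Prop} {φ : Equiv.Perm V} (h : AutR R φ) : AutR R φ.symm := by
  intro a b
  have := h (φ.symm a) (φ.symm b)
  simpa using this.symm

lemma AutR.mul {R : V → V → Prop} {φ ψ : Equiv.Perm V} (h : AutR R φ) (h' : AutR R ψ) :
    AutR R (φ * ψ) := by
  intro a b
  simp only [Equiv.Perm.mul_apply]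
  rw [h, h']

lemma AutR.one {R : V → V → Prop} : AutR R (1 : Equiv.Perm V) := by
  intro a b; simp

lemma mem_mp {φ : Equiv.Perm V} {X : Finset V} {y : V} : y ∈ mp φ X ↔ φ.symm y ∈ X := by
  simp [mp, Finset.mem_map_equiv]

lemma apply_mem_mp {φ : Equiv.Perm V} {X : Finset V} {y : V} : φ y ∈ mp φ X ↔ y ∈ X := by
  simp [mem_mp]

lemma mp_mul {φ ψ : Equiv.Perm V} {X : Finset V} : mp (φ * ψ) X = mp φ (mp ψ X) := by
  ext y
  simp only [mem_mp]
  rfl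

lemma mp_symm {φ : Equiv.Perm V} {X : Finset V} : mp φ.symm (mp φ X) = X := by
  ext y; simp only [mem_mp]; simp

lemma mp_symm' {φ : Equiv.Perm V} {X : Finset V} : mp φ (mp φ.symm X) = X := by
  ext y; simp only [mem_mp]; simp

lemma mp_inj {φ : Equiv.Perm V} {X Y : Finset V} (h : mp φ X = mp φ Y) : X = Y := by
  rw [← mp_symm (φ := φ) (X := X), h, mp_symm]

lemma mp_univ {φ : Equiv.Perm V} : mp φ univ = univ := by
  ext y; simp

lemma mp_compl {φ : Equiv.Perm V} {X : Finset V} : mp φ Xᶜ = (mp φ X)ᶜ := by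
  ext y; simp only [mem_mp, mem_compl]

lemma E_mp {G : SimpleGraph V} [DecidableRel G.Adj] {φ : Equiv.Perm V} (h : AutR G.Adj φ)
    (X Y : Finset V) : E G (mp φ X) (mp φ Y) = E G X Y := by
  unfold E mp
  simp only [Finset.sum_map]
  refine Finset.sum_congr rfl fun x _ => Finset.sum_congr rfl fun y _ => ?_
  have := h x y
  simp only [Equiv.coe_toEmbedding, this]

lemma dd_mp {G : SimpleGraph V} [DecidableRel G.Adj] {φ : Equiv.Perm V} (h : AutR G.Adj φ)
    (X : Finset V) : dd G (mp φ X) = dd G X := by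
  unfold dd
  rw [← mp_compl, E_mp h]

lemma nbv_mp {G : SimpleGraph V} [DecidableRel G.Adj] {φ : Equiv.Perm V} (h : AutR G.Adj φ)
    (v : V) : nbv G (φ v) = mp φ (nbv G v) := by
  ext y
  simp only [mem_nbv, mem_mp]
  rw [← h v (φ.symm y)]; simp

open scoped Classical in
/-- The images of a set under the automorphisms. -/
noncomputable def orb (R : V → V → Prop) (X : Finset V) : Finset (Finset V) :=
  univ.filter fun Y => ∃ φ, AutR R φ ∧ Y = mp φ X

lemma mem_orb {R : V → V → Prop} {X Y : Finset V} :
    Y ∈ orb R X ↔ ∃ φ, AutR R φ ∧ Y = mp φ X := by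
  simp [orb]

/-- An invariant partition into parts of equal size. -/
structure BlockSys (R : V → V → Prop) (B : Finset (Finset V)) (b : ℕ) : Prop where
  inv : ∀ φ, AutR R φ → ∀ X ∈ B, mp φ X ∈ B
  cover : ∀ v, ∃ X ∈ B, v ∈ X
  disj : ∀ X ∈ B, ∀ Y ∈ B, ∀ v, v ∈ X → v ∈ Y → X = Y
  card : ∀ X ∈ B, #X = b

lemma orb_blockSys {R : V → V → Prop} (ht : TransR R) {X : Finset V} (hX : X.Nonempty)
    (hb : ∀ φ, AutR R φ → (∃ v, v ∈ X ∧ v ∈ mp φ X) → mp φ X = X) :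
    BlockSys R (orb R X) #X := by
  refine ⟨?_, ?_, ?_, ?_⟩
  · intro φ hφ Y hY
    rw [mem_orb] at hY ⊢
    obtain ⟨ψ, hψ, rfl⟩ := hY
    exact ⟨φ * ψ, hφ.mul hψ, mp_mul.symm⟩
  · intro v
    obtain ⟨x, hx⟩ := hX
    obtain ⟨φ, hφ, rfl⟩ := ht x v
    exact ⟨mp φ X, mem_orb.2 ⟨φ, hφ, rfl⟩, apply_mem_mp.2 hx⟩
  · intro Y hY Z hZ v hvY hvZ
    rw [mem_orb] at hY hZ
    obtain ⟨φ, hφ, rfl⟩ := hY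
    obtain ⟨ψ, hψ, rfl⟩ := hZ
    have := hb (φ.symm * ψ) (hφ.symm.mul hψ) ⟨φ.symm v, mem_mp.1 hvY, by
      rw [mp_mul, mem_mp]; simpa using hvZ⟩
    rw [mp_mul] at this
    rw [← mp_symm' (φ := φ) (X := mp ψ X), this]
  · intro Y hY
    rw [mem_orb] at hY
    obtain ⟨φ, hφ, rfl⟩ := hY
    simp

lemma BlockSys.card_univ {R : V → V → Prop} {B : Finset (Finset V)} {b : ℕ}
    (h : BlockSys R B b) : Fintype.card V = #B * b := by
  have h1 : B.biUnion id = univ := by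
    ext v
    simp only [mem_biUnion, id, mem_univ, iff_true]
    exact h.cover v
  rw [← Finset.card_univ, ← h1, card_biUnion]
  · simp only [id]
    rw [Finset.sum_congr rfl h.card]; simp
  · intro X hX Y hY hne
    change Disjoint X Y
    rw [Finset.disjoint_left]
    intro v hv hv'
    exact hne (h.disj X hX Y hY v hv hv')

/-- Double counting for block systems. -/
lemma BlockSys.count {R : V → V → Prop} (ht : TransR R) {B : Finset (Finset V)} {b : ℕ}
    (h : BlockSys R B b) (F : Finset V → Finset V) (t : ℕ)
    (hF : ∀ φ, AutR R φ → ∀ X ∈ B, F (mp φ X) = mp φ (F X))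
    (hFt : ∀ X ∈ B, #(F X) = t) (hV : Nonempty V) :
    ∃ r, t = r * b ∧ ∀ w, #(B.filter fun X => w ∈ F X) = r := by
  obtain ⟨w0⟩ := hV
  have hconst : ∀ w, #(B.filter fun X => w ∈ F X) = #(B.filter fun X => w0 ∈ F X) := by
    intro w
    obtain ⟨φ, hφ, rfl⟩ := ht w0 w
    symm
    refine Finset.card_bij (fun X _ => mp φ X) ?_ ?_ ?_
    · intro X hX
      rw [mem_filter] at hX ⊢
      refine ⟨h.inv φ hφ X hX.1, ?_⟩
      rw [hF φ hφ X hX.1, apply_mem_mp]; exact hX.2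
    · intro X _ Y _ hXY
      exact mp_inj hXY
    · intro Y hY
      rw [mem_filter] at hY
      have hm := h.inv _ hφ.symm Y hY.1
      refine ⟨mp φ.symm Y, ?_, mp_symm'⟩
      rw [mem_filter]
      refine ⟨hm, ?_⟩
      rw [hF _ hφ.symm Y hY.1, mem_mp]
      simpa using hY.2
  refine ⟨_, ?_, hconst⟩
  set r := #(B.filter fun X => w0 ∈ F X) with hr
  have h1 : ∑ X ∈ B, #(F X) = #B * t := by
    rw [Finset.sum_congr rfl hFt]; simp
  have h2 : ∑ X ∈ B, #(F X) = ∑ w : V, #(B.filter fun X => w ∈ F X) := by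
    have := Finset.sum_card_bipartiteAbove_eq_sum_card_bipartiteBelow
      (s := B) (t := (univ : Finset V)) (fun X w => w ∈ F X)
    unfold bipartiteAbove bipartiteBelow at this
    simpa using this
  have h3 : ∑ w : V, #(B.filter fun X => w ∈ F X) = Fintype.card V * r := by
    rw [Finset.sum_congr rfl (fun w _ => hconst w)]; simp
  have h4 := h.card_univ
  have hpos : 0 < #B := by
    obtain ⟨X, hX, _⟩ := h.cover w0
    exact card_pos.2 ⟨X, hX⟩
  have : #B * t = #B * (r * b) := by
    rw [← h1, h2, h3, h4]; ring
  exact Nat.eq_of_mul_eq_mul_left hpos this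

end aut
end FC

namespace FC
open SimpleGraph Finset
variable {V : Type*} [Fintype V] [DecidableEq V] {G : SimpleGraph V} [DecidableRel G.Adj] {k : ℕ}

lemma lexmin (P : Finset V → Prop) (f : Finset V → ℕ) (h : ∃ X, P X) :
    ∃ X, P X ∧ (∀ Y, P Y → f X ≤ f Y) ∧ (∀ Y, P Y → f Y ≤ f X → #X ≤ #Y) := by
  classical
  obtain ⟨X0, hX0⟩ := h
  obtain ⟨X1, hX1, hm1⟩ := Finset.exists_min_image (univ.filter P) f ⟨X0, by simpa using hX0⟩
  obtain ⟨X2, hX2, hm2⟩ := Finset.exists_min_image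
    (univ.filter fun X => P X ∧ f X ≤ f X1) card ⟨X1, by simpa using hX1⟩
  simp only [mem_filter, mem_univ, true_and] at *
  exact ⟨X2, hX2.1, fun Y hY => hX2.2.trans (hm1 Y hY),
    fun Y hY hf => hm2 Y ⟨hY, hf.trans hX2.2⟩⟩

lemma BlockSys.exists_fun {R : V → V → Prop} {B : Finset (Finset V)} {b : ℕ}
    (h : BlockSys R B b) : ∃ A : V → Finset V, (∀ x, A x ∈ B ∧ x ∈ A x) ∧
      (∀ x y, y ∈ A x → A y = A x) ∧ (∀ φ, AutR R φ → ∀ x, A (φ x) = mp φ (A x)) := by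
  choose A hA hA' using h.cover
  refine ⟨A, fun x => ⟨hA x, hA' x⟩, ?_, ?_⟩
  · intro x y hy
    exact h.disj _ (hA y) _ (hA x) y (hA' y) hy
  · intro φ hφ x
    exact h.disj _ (hA _) _ (h.inv φ hφ _ (hA x)) (φ x) (hA' _) (apply_mem_mp.2 (hA' x))

lemma dd_small (hreg : G.IsRegularOfDegree k) (X : Finset V) :
    k * #X + #X ≤ dd G X + #X * #X := by
  have h1 := dd_add hreg X
  have h2 := E_self_le (G := G) X
  omega

structure Alpha (G : SimpleGraph V) [DecidableRel G.Adj] (k a : ℕ) (A : V → Finset V) (m : V → V) :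
    Prop where
  self : ∀ x, x ∈ A x
  eq : ∀ x y, y ∈ A x → A y = A x
  card : ∀ x, #(A x) = a
  ka : k ≤ a
  a2 : a + 3 ≤ 2 * k
  inner : ∀ x, #(nbv G x ∩ A x) + 1 = k
  cut : ∀ X : Finset V, 2 ≤ #X → 2 ≤ #Xᶜ → a ≤ dd G X
  n : 2 * a ≤ Fintype.card V
  madj : ∀ x, G.Adj x (m x)
  mnot : ∀ x, m x ∉ A x
  muniq : ∀ x y, G.Adj x y → y ∉ A x → y = m x

lemma cut_alt (hconn : G.Connected) (ht : TransR G.Adj) (hreg : G.IsRegularOfDegree k)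
    (hk : 5 ≤ k) :
    (∀ X : Finset V, 2 ≤ #X → 2 ≤ #Xᶜ → 2 * k - 2 ≤ dd G X) ∨ ∃ a A m, Alpha G k a A m := by
  by_contra hcon
  push Not at hcon
  obtain ⟨⟨X0, hX1, hX2, hX3⟩, hcon⟩ := hcon
  obtain ⟨A0, ⟨hA1, hA2⟩, hmin, hmin2⟩ := lexmin (fun X : Finset V => 2 ≤ #X ∧ 2 ≤ #Xᶜ) (dd G)
    ⟨X0, hX1, hX2⟩
  have hlt : dd G A0 < 2 * k - 2 := lt_of_le_of_lt (hmin X0 ⟨hX1, hX2⟩) hX3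
  have hn : 2 * #A0 ≤ Fintype.card V := by
    have := hmin2 A0ᶜ ⟨hA2, by simpa using hA1⟩ (dd_compl A0).le
    have := card_compl_add A0
    omega
  have h3 : 3 ≤ #A0 := by
    by_contra h
    have h2 : #A0 = 2 := by omega
    have := dd_small hreg A0
    rw [h2] at this
    omega
  have hstrict : ∀ Y : Finset V, 2 ≤ #Y → #Y < #A0 → dd G A0 < dd G Y := by
    intro Y hY hY'
    have hc : 2 ≤ #Yᶜ := by
      have := card_compl_add A0
      have := card_compl_add Y
      omega
    by_contra h
    have := hmin2 Y ⟨hY, hc⟩ (by omega)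
    omega
  have hblock : ∀ φ, AutR G.Adj φ → (∃ v, v ∈ A0 ∧ v ∈ mp φ A0) → mp φ A0 = A0 := by
    intro φ hφ ⟨v, hv, hv'⟩
    by_contra hne
    set Y := mp φ A0 with hY
    have hYc : #Y = #A0 := by simp [hY]
    have hYd : dd G Y = dd G A0 := dd_mp hφ A0
    have hi1 : 1 ≤ #(A0 ∩ Y) := card_pos.2 ⟨v, by simp [hv, hv']⟩
    have hi2 : #(A0 ∩ Y) < #A0 := by
      by_contra h
      have h1 : A0 ∩ Y = A0 := eq_of_subset_of_card_le inter_subset_left (by omega)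
      have h2 : A0 ⊆ Y := by rw [← h1]; exact inter_subset_right
      exact hne (eq_of_subset_of_card_le h2 (by omega)).symm
    have hu := card_union_add_card_inter A0 Y
    by_cases hi3 : 2 ≤ #(A0 ∩ Y)
    · have h1 := hstrict _ hi3 hi2
      have h2 : dd G A0 ≤ dd G (A0 ∪ Y) := by
        have := card_compl_add (A0 ∪ Y)
        exact hmin _ ⟨by omega, by omega⟩
      have := dd_submod (G := G) A0 Y
      omega
    · have h4 := card_sdiff_add_card_inter A0 Y
      have h5 := card_sdiff_add_card_inter Y A0
      rw [inter_comm] at h5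
      have h1 := hstrict (A0 \ Y) (by omega) (by omega)
      have h2 := hstrict (Y \ A0) (by omega) (by omega)
      have := dd_posimod (G := G) A0 Y
      omega
  have hBS := orb_blockSys ht (card_pos.1 (by omega)) hblock
  obtain ⟨A, hA, hAeq, hAφ⟩ := hBS.exists_fun
  obtain ⟨x0, hx0⟩ : A0.Nonempty := card_pos.1 (by omega)
  have hAx0 : A x0 = A0 := hBS.disj _ (hA x0).1 _
    (mem_orb.2 ⟨1, AutR.one, by ext y; rw [mem_mp]; rfl⟩) x0 (hA x0).2 hx0
  set t := #(nbv G x0 ∩ A x0) with htdef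
  have hinner : ∀ x, #(nbv G x ∩ A x) = t := by
    intro x
    obtain ⟨φ, hφ, rfl⟩ := ht x0 x
    rw [nbv_mp hφ, hAφ φ hφ, ← Finset.map_inter, card_map]
  have hEA : E G A0 A0 = #A0 * t := by
    rw [E_eq, ← smul_eq_mul, ← Finset.sum_const]
    refine Finset.sum_congr rfl fun x hx => ?_
    rw [← hinner x, hAeq x0 x (by rw [hAx0]; exact hx), hAx0]
  have hdA := dd_add hreg A0
  rw [hEA] at hdA
  have hta : t + 1 ≤ #A0 := by
    have : nbv G x0 ∩ A x0 ⊆ A0.erase x0 := by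
      intro y hy
      simp at hy
      rw [hAx0] at hy
      simp [hy.2, hy.1.ne']
    have := card_le_card this
    rw [card_erase_of_mem hx0] at this
    omega
  have hpos : 0 < dd G A0 := dd_pos hconn ⟨x0, hx0⟩ (by
    rintro h; rw [h] at hA2; simp at hA2)
  have htk : t < k := by
    by_contra h
    have : k * #A0 ≤ #A0 * t := by nlinarith
    omega
  have ht1 : t + 1 = k := by
    by_contra hne
    obtain ⟨e, he⟩ : ∃ e, k = t + e := ⟨k - t, by omega⟩
    have hd : dd G A0 = #A0 * e := by
      rw [he] at hdA; nlinarith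
    rw [hd] at hlt
    have h2 : #A0 * e + 2 < 2 * t + 2 * e := by omega
    obtain ⟨e', rfl⟩ : ∃ e', e = e' + 2 := ⟨e - 2, by omega⟩
    rcases Nat.eq_zero_or_pos t with h0 | h0
    · have := Nat.mul_le_mul_right (e' + 2) h3
      omega
    · obtain ⟨t', ht'⟩ : ∃ t', t = t' + 1 := ⟨t - 1, by omega⟩
      rw [ht'] at h2 hta
      have h5 := Nat.mul_le_mul_right (e' + 2) hta
      have h6 : (t' + 1 + 1) * (e' + 2) = t' * e' + 2 * t' + 2 * e' + 4 := by ring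
      rw [h6] at h5
      have := Nat.zero_le (t' * e')
      omega
  have hdA2 : dd G A0 = #A0 := by
    rw [← ht1] at hdA; nlinarith
  have hone : ∀ x, #(nbv G x \ A x) = 1 := by
    intro x
    have := card_sdiff_add_card_inter (nbv G x) (A x)
    rw [card_nbv hreg, hinner] at this
    omega
  have hm : ∀ x, ∃ y, nbv G x \ A x = {y} := fun x => card_eq_one.1 (hone x)
  choose m hm using hm
  have hm' : ∀ x y, (G.Adj x y ∧ y ∉ A x) ↔ y = m x := by
    intro x y
    have : y ∈ nbv G x \ A x ↔ y ∈ ({m x} : Finset V) := by rw [hm]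
    simpa using this
  refine hcon #A0 A m ⟨fun x => (hA x).2, hAeq, fun x => hBS.card _ (hA x).1, by omega, by omega,
    fun x => by rw [hinner]; exact ht1, fun X h1 h2 => by rw [← hdA2]; exact hmin X ⟨h1, h2⟩, hn,
    fun x => ((hm' x _).2 rfl).1, fun x => ((hm' x _).2 rfl).2,
    fun x y h1 h2 => (hm' x y).1 ⟨h1, h2⟩⟩

namespace Alpha
variable {a : ℕ} {A : V → Finset V} {m : V → V}

lemma mm (h : Alpha G k a A m) (x : V) : m (m x) = x := by
  symm
  refine h.muniq _ _ (h.madj x).symm fun hx => h.mnot x ?_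
  rw [h.eq _ _ hx]; exact h.self _

lemma outer (h : Alpha G k a A m) (x : V) : nbv G x \ A x = {m x} := by
  ext y
  simp only [mem_sdiff, mem_nbv, mem_singleton]
  constructor
  · rintro ⟨h1, h2⟩; exact h.muniq x y h1 h2
  · rintro rfl; exact ⟨h.madj x, h.mnot x⟩

lemma E_sub (h : Alpha G k a A m) {x : V} {Z : Finset V} (hZ : Z ⊆ A x) :
    E G Z (A x) + #Z = #Z * k := by
  rw [E_eq]
  have : ∀ z ∈ Z, #(nbv G z ∩ A x) = k - 1 := by
    intro z hz
    have h1 := h.inner z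
    rw [h.eq x z (hZ hz)] at h1
    omega
  rw [Finset.sum_congr rfl this, sum_const, smul_eq_mul]
  have := h.inner x
  obtain ⟨k', rfl⟩ : ∃ k', k = k' + 1 := ⟨k - 1, by omega⟩
  simp; ring

lemma dd_block (h : Alpha G k a A m) (hreg : G.IsRegularOfDegree k) (x : V) :
    dd G (A x) = a := by
  have h1 := dd_add hreg (A x)
  have h2 := h.E_sub (x := x) (Subset.refl _)
  have h3 := h.card x
  rw [h3] at h1 h2
  have : k * a = a * k := mul_comm _ _
  omega

lemma dd_sub (h : Alpha G k a A m) (hreg : G.IsRegularOfDegree k) (hk : 5 ≤ k) {x : V}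
    {Z : Finset V} (hZ : Z ⊆ A x) (hne : Z ≠ A x) (h2 : 2 ≤ #Z) : 2 * k - 2 ≤ dd G Z := by
  have hs := dd_small hreg Z
  by_cases hz : #Z + 1 ≤ k
  · obtain ⟨z, hz'⟩ : ∃ z, #Z = z + 2 := ⟨#Z - 2, by omega⟩
    obtain ⟨k', hk'⟩ : ∃ k', k = #Z + 1 + k' := ⟨k - (#Z + 1), by omega⟩
    have : 2 * k ≤ dd G Z + 2 := by
      rw [hz'] at hs hk'
      nlinarith [Nat.zero_le (z * k')]
    omega
  · have h1 := dd_add hreg Z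
    have h3 := h.E_sub hZ
    have h4 := h.E_sub (x := x) (Z := A x \ Z) sdiff_subset
    have h5 := E_self_le (G := G) (A x \ Z)
    have hun : Z ∪ (A x \ Z) = A x := union_sdiff_of_subset hZ
    have h6 : E G Z (A x) = E G Z Z + E G Z (A x \ Z) := by
      conv_lhs => rw [← hun]
      rw [E_union_right disjoint_sdiff]
    have h7 : E G (A x \ Z) (A x) = E G Z (A x \ Z) + E G (A x \ Z) (A x \ Z) := by
      rw [E_comm Z, ← E_union_right disjoint_sdiff, hun]
    have h8 : #(A x \ Z) + #Z = a := by
      rw [← h.card x]; exact card_sdiff_add_card_eq_card hZ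
    have h9 : 1 ≤ #(A x \ Z) := by
      rw [Nat.one_le_iff_ne_zero, Ne, card_eq_zero, sdiff_eq_empty_iff_subset]
      intro hh; exact hne (Subset.antisymm hZ hh)
    have := h.a2
    set M := #(A x \ Z)
    obtain ⟨m', hm'⟩ : ∃ m', M = m' + 1 := ⟨M - 1, by omega⟩
    obtain ⟨k', hk'⟩ : ∃ k', k = m' + 3 + k' := ⟨k - (m' + 3), by omega⟩
    have hc : k * #Z = #Z * k := mul_comm _ _
    have : #Z + E G Z (A x \ Z) = dd G Z := by omega
    have : k ≤ E G Z (A x \ Z) + 1 := by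
      rw [hm'] at h4 h5
      rw [hk'] at h4 ⊢
      nlinarith [Nat.zero_le (m' * k')]
    omega

lemma dd_cross (h : Alpha G k a A m) (hreg : G.IsRegularOfDegree k) (hk : 5 ≤ k) 
    {X : Finset V} (h1 : 2 ≤ #X) (h2 : 2 ≤ #Xᶜ) {x : V} (hx : x ∈ X) (hx' : ¬ A x ⊆ X) :
    2 * k - 2 ≤ dd G X := by
  have hsmall : ∀ Y : Finset V, #Y = 2 → 2 * k - 2 ≤ dd G Y := by
    intro Y hY
    have := dd_small hreg Y
    rw [hY] at this; omega
  by_cases e1 : #X = 2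
  · exact hsmall X e1
  by_cases e2 : #Xᶜ = 2
  · rw [← dd_compl]; exact hsmall _ e2
  have hb := h.dd_block hreg x
  have hka := h.ka
  have hn := h.n
  have hca := h.card x
  have c1 := card_inter_add_card_sdiff X (A x)
  have c2 := card_inter_add_card_sdiff (A x) X
  rw [inter_comm] at c2
  have c3 := card_union_add_card_inter X (A x)
  have c4 := card_compl_add X
  have c5 := card_compl_add (X ∪ A x)
  have p1 : 1 ≤ #(X ∩ A x) := card_pos.2 ⟨x, by simp [hx, h.self x]⟩
  have p2 : 1 ≤ #(A x \ X) := by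
    rw [Nat.one_le_iff_ne_zero, Ne, card_eq_zero, sdiff_eq_empty_iff_subset]; exact hx'
  by_cases q1 : 2 ≤ #(X ∪ A x)ᶜ ∧ 2 ≤ #(X ∩ A x)
  · have := dd_submod (G := G) X (A x)
    have s1 := h.cut (X ∪ A x) (by omega) q1.1
    have s2 := h.dd_sub hreg hk (x := x) (Z := X ∩ A x) inter_subset_right (by
      intro hh; rw [hh] at c2; omega) q1.2
    omega
  by_cases q2 : 2 ≤ #(X \ A x) ∧ 2 ≤ #(A x \ X)
  · have := dd_posimod (G := G) X (A x)
    have c6 := card_compl_add (X \ A x)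
    have s1 := h.cut (X \ A x) q2.1 (by omega)
    have s2 := h.dd_sub hreg hk (x := x) (Z := A x \ X) sdiff_subset (by
      intro hh; rw [hh] at c2; omega) q2.2
    omega
  omega

end Alpha

/-- Edge connectivity equals the degree. -/
lemma dd_ge_k (hconn : G.Connected) (ht : TransR G.Adj) (hreg : G.IsRegularOfDegree k)
    (hk : 5 ≤ k) {X : Finset V} (h1 : X.Nonempty) (h2 : X ≠ univ) : k ≤ dd G X := by
  have hs : ∀ Y : Finset V, #Y = 1 → k ≤ dd G Y := by
    intro Y hY
    have := dd_small hreg Y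
    rw [hY] at this; omega
  have p1 := h1.card_pos
  have p2 : 1 ≤ #Xᶜ := by
    rw [Nat.one_le_iff_ne_zero, Ne, card_eq_zero, compl_eq_empty_iff]; exact h2
  by_cases e1 : #X = 1
  · exact hs X e1
  by_cases e2 : #Xᶜ = 1
  · rw [← dd_compl]; exact hs _ e2
  rcases cut_alt hconn ht hreg hk with h | ⟨a, A, m, h⟩
  · have := h X (by omega) (by omega); omega
  · have := h.cut X (by omega) (by omega)
    have := h.ka
    omega

end FC

namespace FC
open SimpleGraph Finset
variable {V : Type*} [Fintype V] [DecidableEq V] {G : SimpleGraph V} [DecidableRel G.Adj] {k : ℕ}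

open scoped Classical in
/-- Neighbourhood of a set with respect to a relation. -/
noncomputable def nbR (R : V → V → Prop) (X : Finset V) : Finset V :=
  univ.filter fun w => ∃ x ∈ X, R x w

lemma mem_nbR {R : V → V → Prop} {X : Finset V} {w : V} : w ∈ nbR R X ↔ ∃ x ∈ X, R x w := by
  simp [nbR]

lemma nbR_mono {R : V → V → Prop} {X Y : Finset V} (h : X ⊆ Y) : nbR R X ⊆ nbR R Y := by
  intro w; simp only [mem_nbR]; rintro ⟨x, hx, hw⟩; exact ⟨x, h hx, hw⟩

lemma nbR_union {R : V → V → Prop} {X Y : Finset V} : nbR R (X ∪ Y) = nbR R X ∪ nbR R Y := by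
  ext w; simp only [mem_nbR, mem_union]
  constructor
  · rintro ⟨x, hx | hx, hw⟩
    · exact Or.inl ⟨x, hx, hw⟩
    · exact Or.inr ⟨x, hx, hw⟩
  · rintro (⟨x, hx, hw⟩ | ⟨x, hx, hw⟩)
    · exact ⟨x, Or.inl hx, hw⟩
    · exact ⟨x, Or.inr hx, hw⟩

lemma nbR_mp {R : V → V → Prop} {φ : Equiv.Perm V} (h : AutR R φ) (X : Finset V) :
    nbR R (mp φ X) = mp φ (nbR R X) := by
  ext w
  simp only [mem_nbR, mem_mp]
  constructor
  · rintro ⟨x, hx, hw⟩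
    exact ⟨φ.symm x, hx, (h.symm x w).2 hw⟩
  · rintro ⟨x, hx, hw⟩
    refine ⟨φ x, by simpa using hx, ?_⟩
    have := (h x (φ.symm w)).2 hw
    simpa using this

lemma atom {R : V → V → Prop} (hs : ∀ x y, R x y → R y x) (ht : TransR R)
    (hf : ∀ X : Finset V, X.Nonempty → nbR R X ≠ univ → #X ≤ #(nbR R X))
    (X0 : Finset V) (h0 : X0.Nonempty) (h0' : nbR R X0 ≠ univ) :
    ∃ (X : Finset V) (μ r : ℕ), X.Nonempty ∧ nbR R X ≠ univ ∧ #(nbR R X) = #X + μ ∧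
      (∀ Y : Finset V, Y.Nonempty → nbR R Y ≠ univ → #Y + μ ≤ #(nbR R Y)) ∧
      (∀ Y : Finset V, Y.Nonempty → nbR R Y ≠ univ → #(nbR R Y) ≤ #Y + μ → #X ≤ #Y) ∧
      BlockSys R (orb R X) #X ∧ #X + μ = r * #X ∧
      (∀ w, #((orb R X).filter fun Y => w ∈ nbR R Y) = r) := by
  obtain ⟨X, ⟨hX1, hX2⟩, hmin, hmin2⟩ := lexmin
    (fun X : Finset V => X.Nonempty ∧ nbR R X ≠ univ) (fun X => #(nbR R X) - #X) ⟨X0, h0, h0'⟩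
  have hle := hf X hX1 hX2
  obtain ⟨μ, hμ⟩ : ∃ μ, #(nbR R X) = #X + μ := ⟨#(nbR R X) - #X, by omega⟩
  have hmin : ∀ Y : Finset V, Y.Nonempty → nbR R Y ≠ univ → #Y + μ ≤ #(nbR R Y) := by
    intro Y h1 h2
    have := hmin Y ⟨h1, h2⟩
    have := hf Y h1 h2
    omega
  have hmin2 : ∀ Y : Finset V, Y.Nonempty → nbR R Y ≠ univ → #(nbR R Y) ≤ #Y + μ → #X ≤ #Y := by
    intro Y h1 h2 h3
    exact hmin2 Y ⟨h1, h2⟩ (by omega)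
  have hstar : 2 * #X + μ ≤ Fintype.card V := by
    have e1 := card_compl_add (nbR R X)
    have hne : ((nbR R X)ᶜ).Nonempty := by
      rw [nonempty_iff_ne_empty, Ne, compl_eq_empty_iff]; exact hX2
    have hsub : nbR R (nbR R X)ᶜ ⊆ Xᶜ := by
      intro w hw
      rw [mem_nbR] at hw
      obtain ⟨x, hx, hxw⟩ := hw
      rw [mem_compl] at hx ⊢
      intro hw
      exact hx (mem_nbR.2 ⟨w, hw, hs _ _ hxw⟩)
    have hc := card_le_card hsub
    have e2 := card_compl_add X
    have hnu : nbR R (nbR R X)ᶜ ≠ univ := by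
      intro h
      rw [h, univ_subset_iff, compl_eq_univ_iff] at hsub
      rw [hsub] at hX1; exact absurd hX1 (by simp)
    have := hmin2 _ hne hnu (by omega)
    omega
  have hblock : ∀ φ, AutR R φ → (∃ v, v ∈ X ∧ v ∈ mp φ X) → mp φ X = X := by
    intro φ hφ ⟨v, hv, hv'⟩
    by_contra hne
    set Y := mp φ X with hY
    have hYc : #Y = #X := by simp [hY]
    have hYd : #(nbR R Y) = #X + μ := by rw [hY, nbR_mp hφ, card_map, hμ]
    have hi2 : #(X ∩ Y) < #X := by
      by_contra h
      have h1 : X ∩ Y = X := eq_of_subset_of_card_le inter_subset_left (by omega)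
      have h2 : X ⊆ Y := by rw [← h1]; exact inter_subset_right
      exact hne (eq_of_subset_of_card_le h2 (by omega)).symm
    have hu := card_union_add_card_inter X Y
    have hu' := card_union_add_card_inter (nbR R X) (nbR R Y)
    rw [← nbR_union] at hu'
    have hZs : nbR R (X ∩ Y) ⊆ nbR R X ∩ nbR R Y :=
      subset_inter (nbR_mono inter_subset_left) (nbR_mono inter_subset_right)
    have hZc := card_le_card hZs
    have hZn : (X ∩ Y).Nonempty := ⟨v, by simp [hv, hv']⟩
    have hZu : nbR R (X ∩ Y) ≠ univ := by
      intro h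
      have := nbR_mono (R := R) (inter_subset_left : X ∩ Y ⊆ X)
      rw [h, univ_subset_iff] at this
      exact hX2 this
    have hZ1 : #(X ∩ Y) + μ < #(nbR R (X ∩ Y)) := by
      by_contra h
      have := hmin2 _ hZn hZu (by omega)
      omega
    have hUu : nbR R (X ∪ Y) ≠ univ := by
      intro h
      rw [h, Finset.card_univ] at hu'
      omega
    have := hmin (X ∪ Y) (hX1.mono subset_union_left) hUu
    omega
  have hBS := orb_blockSys ht hX1 hblock
  obtain ⟨x0, hx0⟩ := hX1
  obtain ⟨r, hr, hr'⟩ := hBS.count ht (nbR R) (#X + μ) (fun φ hφ Y _ => nbR_mp hφ Y) (by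
    intro Y hY
    rw [mem_orb] at hY
    obtain ⟨φ, hφ, rfl⟩ := hY
    rw [nbR_mp hφ, card_map, hμ]) ⟨x0⟩
  exact ⟨X, μ, r, ⟨x0, hx0⟩, hX2, hμ, hmin, hmin2, hBS, hr, hr'⟩

lemma colorable_of (X : Finset V) (h : ∀ x y, G.Adj x y → (x ∈ X ↔ y ∉ X)) : G.Colorable 2 := by
  refine ⟨Coloring.mk (fun v => if v ∈ X then (0 : Fin 2) else 1) ?_⟩
  intro x y hxy
  have := h x y hxy
  by_cases hx : x ∈ X <;> by_cases hy : y ∈ X <;> simp_all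

lemma nbR_adj_ge (hreg : G.IsRegularOfDegree k) (X : Finset V) :
    k * #X + E G (nbR G.Adj X) Xᶜ = k * #(nbR G.Adj X) := by
  rw [← E_univ hreg (nbR G.Adj X), ← E_add_compl (nbR G.Adj X) X, ← E_univ hreg X,
    ← E_add_compl X (nbR G.Adj X), E_comm (nbR G.Adj X) X]
  have : E G X (nbR G.Adj X)ᶜ = 0 := by
    apply E_eq_zero
    intro x hx y hy h
    rw [mem_compl] at hy
    exact hy (mem_nbR.2 ⟨x, hx, h⟩)
  rw [this, add_zero]

lemma B0 (hconn : G.Connected) (hreg : G.IsRegularOfDegree k) (hk : 1 ≤ k)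
    (hnb : ¬ G.Colorable 2) {X : Finset V} (h1 : X.Nonempty) (h2 : nbR G.Adj X ≠ univ) :
    #X < #(nbR G.Adj X) := by
  by_contra hle
  have h := nbR_adj_ge hreg X
  have hE : E G (nbR G.Adj X) Xᶜ = 0 := by
    have : k * #(nbR G.Adj X) ≤ k * #X := Nat.mul_le_mul_left _ (by omega)
    omega
  have hback : ∀ y ∈ nbR G.Adj X, ∀ z, G.Adj y z → z ∈ X := by
    intro y hy z hyz
    by_contra hz
    have := E_pos hy (by simpa using hz : z ∈ Xᶜ) hyz
    omega
  have hfor : ∀ y ∈ X, ∀ z, G.Adj y z → z ∈ nbR G.Adj X := fun y hy z h => mem_nbR.2 ⟨y, hy, h⟩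
  by_cases hXint : (X ∩ nbR G.Adj X).Nonempty
  · have := closed_eq_univ hconn hXint (by
      intro x hx y hxy
      rw [mem_inter] at hx ⊢
      exact ⟨hback x hx.2 y hxy, hfor x hx.1 y hxy⟩)
    apply h2
    rw [← univ_subset_iff, ← this]; exact inter_subset_right
  · have hU := closed_eq_univ hconn (X := X ∪ nbR G.Adj X) (h1.mono subset_union_left) (by
      intro x hx y hxy
      rw [mem_union] at hx ⊢
      rcases hx with hx | hx
      · exact Or.inr (hfor x hx y hxy)
      · exact Or.inl (hback x hx y hxy))
    apply hnb
    apply colorable_of X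
    intro x y hxy
    have hdis : ∀ z, z ∈ X → z ∉ nbR G.Adj X := by
      intro z hz hz'; exact hXint ⟨z, mem_inter.2 ⟨hz, hz'⟩⟩
    have hall : ∀ z, z ∈ X ∨ z ∈ nbR G.Adj X := by
      intro z; rw [← mem_union, hU]; exact mem_univ z
    constructor
    · intro hx hy; exact hdis y hy (hfor x hx y hxy)
    · intro hy
      exact hback y ((hall y).resolve_left hy) x hxy.symm

lemma F3 (hconn : G.Connected) (ht : TransR G.Adj) (hreg : G.IsRegularOfDegree k) (hk : 5 ≤ k)
    (hnb : ¬ G.Colorable 2) {X : Finset V} (h1 : X.Nonempty) (h2 : nbR G.Adj X ≠ univ) :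
    #X + 3 ≤ #(nbR G.Adj X) := by
  by_contra hlt
  obtain ⟨Y, μ, r, hY1, hY2, hY3, hmin, -, -, hr, -⟩ := atom (R := G.Adj) (fun x y h => h.symm) ht
    (fun X h h' => (B0 hconn hreg (by omega) hnb h h').le) X h1 h2
  have h3 := hmin X h1 h2
  have h4 := B0 hconn hreg (by omega) hnb hY1 hY2
  have hb := hY1.card_pos
  have hbμ : #Y ≤ μ := by
    have h5 : 2 ≤ r := by
      by_contra h
      have : r * #Y ≤ 1 * #Y := Nat.mul_le_mul_right _ (by omega)
      omega
    have : 2 * #Y ≤ r * #Y := Nat.mul_le_mul_right _ h5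
    omega
  obtain ⟨y, hy⟩ := hY1
  have : nbv G y ⊆ nbR G.Adj Y := by
    intro z hz; rw [mem_nbv] at hz; exact mem_nbR.2 ⟨y, hy, hz⟩
  have := card_le_card this
  rw [card_nbv hreg] at this
  omega

/-- Closed adjacency. -/
def cl (G : SimpleGraph V) (x y : V) : Prop := x = y ∨ G.Adj x y

lemma cl_trans (ht : TransR G.Adj) : TransR (cl G) := by
  intro x y
  obtain ⟨φ, hφ, h⟩ := ht x y
  refine ⟨φ, ?_, h⟩
  intro a b
  simp only [cl, hφ a b, EmbeddingLike.apply_eq_iff_eq]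

/-- Every vertex has exactly one closed twin. -/
def Twins (G : SimpleGraph V) : Prop :=
  ∃ A : V → Finset V, (∀ x, x ∈ A x) ∧ (∀ x y, y ∈ A x → A y = A x) ∧ (∀ x, #(A x) = 2) ∧
    ∀ x y, y ∈ A x → ∀ w, cl G x w ↔ cl G y w

lemma kappa (hconn : G.Connected) (ht : TransR G.Adj) (hreg : G.IsRegularOfDegree k) (hk : 5 ≤ k)
    {X S : Finset V} (h1 : X.Nonempty) (hS : ∀ x ∈ X, ∀ y, G.Adj x y → y ∈ X ∨ y ∈ S)
    (hw : ∃ w, w ∉ X ∧ w ∉ S) :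
    4 ≤ #S ∧ (6 ≤ k → 6 ≤ #S) ∧ (k = 5 → #S ≤ 4 → Twins G) := by
  have hself : ∀ Y : Finset V, Y ⊆ nbR (cl G) Y := fun Y y hy => mem_nbR.2 ⟨y, hy, Or.inl rfl⟩
  have hsub : nbR (cl G) X ⊆ X ∪ S := by
    intro w hw
    rw [mem_nbR] at hw
    obtain ⟨x, hx, rfl | hxw⟩ := hw
    · exact mem_union_left _ hx
    · exact mem_union.2 (hS x hx w hxw)
  have hXu : nbR (cl G) X ≠ univ := by
    intro h
    obtain ⟨w, hw1, hw2⟩ := hw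
    have := hsub (h ▸ mem_univ w)
    rw [mem_union] at this
    tauto
  obtain ⟨Y, μ, r, hY1, hY2, hY3, hmin, hmin2, hBS, hr, hr'⟩ := atom (R := cl G)
    (by rintro x y (rfl | h); exacts [Or.inl rfl, Or.inr h.symm]) (cl_trans ht)
    (fun X _ _ => card_le_card (hself X)) X h1 hXu
  have hXS : μ ≤ #S := by
    have := hmin X h1 hXu
    have := card_le_card hsub
    have := card_union_le X S
    omega
  have hb := hY1.card_pos
  have hμ1 : 1 ≤ μ := by
    by_contra h
    have he : Y = nbR (cl G) Y := eq_of_subset_of_card_le (hself Y) (by omega)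
    have := closed_eq_univ hconn hY1 (by
      intro x hx y hxy; rw [he]; exact mem_nbR.2 ⟨x, hx, Or.inr hxy⟩)
    exact hY2 (he ▸ this)
  have hkb : ∀ y ∈ Y, insert y (nbv G y) ⊆ nbR (cl G) Y := by
    intro y hy z hz
    rw [mem_insert, mem_nbv] at hz
    refine mem_nbR.2 ⟨y, hy, ?_⟩
    rcases hz with rfl | hz
    · exact Or.inl rfl
    · exact Or.inr hz
  have hkc : ∀ y, #(insert y (nbv G y)) = k + 1 := by
    intro y
    rw [card_insert_of_notMem (by simp), card_nbv hreg]
  have hk1 : k + 1 ≤ #Y + μ := by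
    obtain ⟨y, hy⟩ := hY1
    have := card_le_card (hkb y hy)
    rw [hkc, hY3] at this
    exact this
  -- properties of all blocks
  have hall : ∀ Z ∈ orb (cl G) Y, #Z = #Y ∧ #(nbR (cl G) Z) = #Y + μ ∧ Z.Nonempty ∧
      nbR (cl G) Z ≠ univ := by
    intro Z hZ
    rw [mem_orb] at hZ
    obtain ⟨φ, hφ, rfl⟩ := hZ
    refine ⟨by simp, by rw [nbR_mp hφ, card_map, hY3], by simpa using hY1, ?_⟩
    rw [nbR_mp hφ]
    intro h
    apply hY2
    apply mp_inj (φ := φ)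
    rw [h, mp_univ]
  have hr2 : r ≠ 2 := by
    intro hr2
    rw [hr2] at hr
    have hμb : μ = #Y := by omega
    -- key symmetric step
    have key : ∀ P ∈ orb (cl G) Y, ∀ Q ∈ orb (cl G) Y, P ≠ Q → (∃ p ∈ P, p ∈ nbR (cl G) Q) →
        #(Q.filter fun q => q ∈ nbR (cl G) P) ≤ #(P.filter fun p => p ∈ nbR (cl G) Q) → False := by
      intro P hP Q hQ hPQ ⟨p, hpP, hpQ⟩ hle
      have hdis : ∀ v, v ∈ P → v ∉ Q := fun v h h' => hPQ (hBS.disj P hP Q hQ v h h')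
      have honly : ∀ x ∈ P, x ∈ nbR (cl G) Q → ∀ y, cl G x y → y ∈ P ∨ y ∈ Q := by
        intro x hx hxQ y hxy
        obtain ⟨Z, hZ, hyZ⟩ := hBS.cover y
        by_contra hcon
        push Not at hcon
        have hZP : Z ≠ P := by rintro rfl; exact hcon.1 hyZ
        have hZQ : Z ≠ Q := by rintro rfl; exact hcon.2 hyZ
        have hthree : ({P, Q, Z} : Finset (Finset V)) ⊆
            (orb (cl G) Y).filter fun W => x ∈ nbR (cl G) W := by
          intro W hW
          simp only [mem_insert, mem_singleton] at hW
          rw [mem_filter]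
          rcases hW with rfl | rfl | rfl
          · exact ⟨hP, hself _ hx⟩
          · exact ⟨hQ, hxQ⟩
          · refine ⟨hZ, mem_nbR.2 ⟨y, hyZ, ?_⟩⟩
            rcases hxy with rfl | h
            · exact Or.inl rfl
            · exact Or.inr h.symm
        have := card_le_card hthree
        rw [hr', card_eq_three.2 ⟨P, Q, Z, hPQ, hZP.symm, hZQ.symm, rfl⟩] at this
        omega
      obtain ⟨hPc, hPn, hPne, hPu⟩ := hall P hP
      obtain ⟨hQc, hQn, hQne, hQu⟩ := hall Q hQ
      set P' := P.filter fun p => p ∈ nbR (cl G) Q with hP'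
      set Q' := Q.filter fun q => q ∈ nbR (cl G) P with hQ'
      have hP's : P' ⊆ P := filter_subset _ _
      have hn1 : nbR (cl G) P' ⊆ P ∪ Q' := by
        intro w hw
        rw [mem_nbR] at hw
        obtain ⟨x, hx, hxw⟩ := hw
        rw [hP', mem_filter] at hx
        rcases honly x hx.1 hx.2 w hxw with h | h
        · exact mem_union_left _ h
        · refine mem_union_right _ ?_
          rw [hQ', mem_filter]
          exact ⟨h, mem_nbR.2 ⟨x, hx.1, hxw⟩⟩
      have hP'ne : P'.Nonempty := ⟨p, by rw [hP', mem_filter]; exact ⟨hpP, hpQ⟩⟩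
      have hP'u : nbR (cl G) P' ≠ univ := by
        intro h
        have := nbR_mono (R := cl G) hP's
        rw [h, univ_subset_iff] at this
        exact hPu this
      have hc1 := card_le_card hn1
      have hc2 := card_union_le P Q'
      have hc3 := hmin2 P' hP'ne hP'u (by omega)
      have hPP : P' = P := eq_of_subset_of_card_le hP's (by omega)
      have hn2 : nbR (cl G) P ⊆ P ∪ Q' := by rw [← hPP] at hn1 ⊢; rwa [hPP] at hn1 ⊢
      have hc4 := card_le_card hn2
      have hQQ : Q' = Q := eq_of_subset_of_card_le (filter_subset _ _) (by omega)
      have hcl := closed_eq_univ hconn (X := P ∪ Q) (hPne.mono subset_union_left) (by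
        intro x hx y hxy
        rw [mem_union] at hx ⊢
        rcases hx with hx | hx
        · rw [← hPP, hP', mem_filter] at hx
          exact honly x hx.1 hx.2 y (Or.inr hxy)
        · -- symmetric
          rw [← hQQ, hQ', mem_filter] at hx
          obtain ⟨Z, hZ, hyZ⟩ := hBS.cover y
          by_contra hcon
          push Not at hcon
          have hZP : Z ≠ P := by rintro rfl; exact hcon.1 hyZ
          have hZQ : Z ≠ Q := by rintro rfl; exact hcon.2 hyZ
          have hthree : ({P, Q, Z} : Finset (Finset V)) ⊆
              (orb (cl G) Y).filter fun W => x ∈ nbR (cl G) W := by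
            intro W hW
            simp only [mem_insert, mem_singleton] at hW
            rw [mem_filter]
            rcases hW with rfl | rfl | rfl
            · exact ⟨hP, hx.2⟩
            · exact ⟨hQ, hself _ hx.1⟩
            · exact ⟨hZ, mem_nbR.2 ⟨y, hyZ, Or.inr hxy.symm⟩⟩
          have := card_le_card hthree
          rw [hr', card_eq_three.2 ⟨P, Q, Z, hPQ, hZP.symm, hZQ.symm, rfl⟩] at this
          omega)
      apply hPu
      rw [← univ_subset_iff, ← hcl]
      intro z hz
      rw [mem_union] at hz
      rcases hz with hz | hz
      · exact hself _ hz
      · rw [← hQQ, hQ', mem_filter] at hz; exact hz.2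
    have hYo : Y ∈ orb (cl G) Y := mem_orb.2 ⟨1, AutR.one, by ext y; rw [mem_mp]; rfl⟩
    -- a boundary vertex
    obtain ⟨w, hw1, hw2⟩ : ∃ w ∈ nbR (cl G) Y, w ∉ Y := by
      by_contra hcon
      push Not at hcon
      have := card_le_card (fun w hw => hcon w hw : nbR (cl G) Y ⊆ Y)
      omega
    obtain ⟨Q, hQ, hwQ⟩ := hBS.cover w
    have hYQ : Y ≠ Q := by rintro rfl; exact hw2 hwQ
    rcases le_total #(Q.filter fun q => q ∈ nbR (cl G) Y) #(Y.filter fun p => p ∈ nbR (cl G) Q)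
      with hle | hle
    · refine key Y hYo Q hQ hYQ ?_ hle
      rw [mem_nbR] at hw1
      obtain ⟨x, hx, hxw⟩ := hw1
      refine ⟨x, hx, mem_nbR.2 ⟨w, hwQ, ?_⟩⟩
      rcases hxw with rfl | h
      · exact Or.inl rfl
      · exact Or.inr h.symm
    · exact key Q hQ Y hYo hYQ.symm ⟨w, hwQ, hw1⟩ hle
  have hr3 : 3 ≤ r := by
    by_contra h
    have : r ≤ 1 := by omega
    have : r * #Y ≤ 1 * #Y := Nat.mul_le_mul_right _ this
    omega
  have hμ2 : 2 * #Y ≤ μ := by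
    have : 3 * #Y ≤ r * #Y := Nat.mul_le_mul_right _ hr3
    omega
  refine ⟨by omega, ?_, ?_⟩
  · intro hk6
    by_contra hcon
    have h5 : #Y = 2 ∧ μ = 5 := by omega
    rw [h5.1, h5.2] at hr
    omega
  · intro hk5 hS4
    have h5 : #Y = 2 ∧ μ = 4 := by omega
    obtain ⟨A, hA, hAeq, -⟩ := hBS.exists_fun
    refine ⟨A, fun x => (hA x).2, hAeq, fun x => by rw [(hall _ (hA x).1).1, h5.1], ?_⟩
    have hN : ∀ x y, y ∈ A x → ∀ w, cl G y w ↔ w ∈ nbR (cl G) (A x) := by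
      intro x y hy w
      have hsub : insert y (nbv G y) ⊆ nbR (cl G) (A x) := by
        intro z hz
        rw [mem_insert, mem_nbv] at hz
        refine mem_nbR.2 ⟨y, hy, ?_⟩
        rcases hz with rfl | hz
        · exact Or.inl rfl
        · exact Or.inr hz
      have := eq_of_subset_of_card_le hsub (by
        rw [hkc, (hall _ (hA x).1).2.1]; omega)
      rw [← this, mem_insert, mem_nbv, cl, eq_comm]
    intro x y hy w
    rw [hN x x (hA x).2, hN x y hy]

end FC

namespace FC
open SimpleGraph Finset
variable {V : Type*} [Fintype V] [DecidableEq V] {G : SimpleGraph V} [DecidableRel G.Adj] {k : ℕ}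

/-- `X` is a union of components of `G - S`. -/
def Cl (G : SimpleGraph V) (S X : Finset V) : Prop :=
  (∀ x ∈ X, x ∉ S) ∧ ∀ x ∈ X, ∀ y, G.Adj x y → y ∉ S → y ∈ X

open scoped Classical in
/-- The components of `G - S`. -/
noncomputable def comps (G : SimpleGraph V) (S : Finset V) : Finset (Finset V) :=
  univ.filter fun C => C.Nonempty ∧ Cl G S C ∧ ∀ Y, Y ⊆ C → Y.Nonempty → Cl G S Y → Y = C

lemma mem_comps {S C : Finset V} : C ∈ comps G S ↔ C.Nonempty ∧ Cl G S C ∧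
    ∀ Y, Y ⊆ C → Y.Nonempty → Cl G S Y → Y = C := by
  simp [comps]

lemma Cl.inter {S X Y : Finset V} (h : Cl G S X) (h' : Cl G S Y) : Cl G S (X ∩ Y) := by
  refine ⟨fun x hx => h.1 x (mem_inter.1 hx).1, fun x hx y hxy hy => ?_⟩
  rw [mem_inter] at hx ⊢
  exact ⟨h.2 x hx.1 y hxy hy, h'.2 x hx.2 y hxy hy⟩

lemma Cl.sdiff {S X Y : Finset V} (h : Cl G S X) (h' : Cl G S Y) : Cl G S (X \ Y) := by
  refine ⟨fun x hx => h.1 x (mem_sdiff.1 hx).1, fun x hx y hxy hy => ?_⟩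
  rw [mem_sdiff] at hx ⊢
  exact ⟨h.2 x hx.1 y hxy hy, fun hyY => hx.2 (h'.2 y hyY x hxy.symm (h.1 x hx.1))⟩

lemma comp_ne {S C : Finset V} (h : C ∈ comps G S) : C.Nonempty := (mem_comps.1 h).1
lemma comp_cl {S C : Finset V} (h : C ∈ comps G S) : Cl G S C := (mem_comps.1 h).2.1
lemma comp_not {S C : Finset V} (h : C ∈ comps G S) {x : V} (hx : x ∈ C) : x ∉ S :=
  (comp_cl h).1 x hx
lemma comp_nb {S C : Finset V} (h : C ∈ comps G S) {x y : V} (hx : x ∈ C) (hxy : G.Adj x y) :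
    y ∈ C ∨ y ∈ S := by
  by_cases hy : y ∈ S
  · exact Or.inr hy
  · exact Or.inl ((comp_cl h).2 x hx y hxy hy)

lemma comp_sub {S C X : Finset V} (h : C ∈ comps G S) (hX : Cl G S X) {v : V} (hv : v ∈ C)
    (hv' : v ∈ X) : C ⊆ X := by
  have := (mem_comps.1 h).2.2 (C ∩ X) inter_subset_left ⟨v, mem_inter.2 ⟨hv, hv'⟩⟩
    ((comp_cl h).inter hX)
  rw [← this]; exact inter_subset_right

lemma comp_eq {S C D : Finset V} (h : C ∈ comps G S) (h' : D ∈ comps G S) {v : V} (hv : v ∈ C)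
    (hv' : v ∈ D) : C = D :=
  Subset.antisymm (comp_sub h (comp_cl h') hv hv') (comp_sub h' (comp_cl h) hv' hv)

lemma comp_cover {S : Finset V} {v : V} (hv : v ∉ S) : ∃ C ∈ comps G S, v ∈ C := by
  obtain ⟨C, ⟨hC1, hC2⟩, -, hmin⟩ := lexmin (fun X => Cl G S X ∧ v ∈ X) (fun _ => 0)
    ⟨Sᶜ, ⟨fun x hx => by simpa using hx, fun x _ y _ hy => by simpa using hy⟩, by simpa using hv⟩
  refine ⟨C, mem_comps.2 ⟨⟨v, hC2⟩, hC1, fun Y hY hYne hYcl => ?_⟩, hC2⟩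
  by_cases hvY : v ∈ Y
  · exact eq_of_subset_of_card_le hY (hmin Y ⟨hYcl, hvY⟩ le_rfl)
  · have := hmin (C \ Y) ⟨hC1.sdiff hYcl, mem_sdiff.2 ⟨hC2, hvY⟩⟩ le_rfl
    have h2 := card_sdiff_add_card_eq_card hY
    have := hYne.card_pos
    omega

lemma comp_of {S U D : Finset V} (h : D ∈ comps G S) (h1 : ∀ x ∈ D, x ∉ U)
    (h2 : ∀ x ∈ D, ∀ y, G.Adj x y → y ∉ D → y ∈ U) : D ∈ comps G U := by
  refine mem_comps.2 ⟨comp_ne h, ⟨h1, fun x hx y hxy hy => ?_⟩, fun Y hY hYne hYcl => ?_⟩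
  · by_contra hyD
    exact hy (h2 x hx y hxy hyD)
  · refine (mem_comps.1 h).2.2 Y hY hYne ⟨fun x hx => comp_not h (hY hx), fun x hx y hxy hy => ?_⟩
    have hyD : y ∈ D := (comp_nb h (hY hx) hxy).resolve_right hy
    exact hYcl.2 x hx y hxy (h1 y hyD)

lemma comps_disj (S : Finset V) : ((comps G S : Finset (Finset V)) : Set (Finset V)).PairwiseDisjoint
    (id : Finset V → Finset V) := by
  intro C hC D hD hne
  change Disjoint C D
  rw [Finset.disjoint_left]
  intro v hv hv'
  exact hne (comp_eq hC hD hv hv')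

lemma comps_biUnion (S : Finset V) : (comps G S).biUnion id = Sᶜ := by
  ext v
  simp only [mem_biUnion, id, mem_compl]
  constructor
  · rintro ⟨C, hC, hv⟩; exact comp_not hC hv
  · intro hv; exact comp_cover hv

lemma comps_card (S : Finset V) : ∑ C ∈ comps G S, #C + #S = Fintype.card V := by
  rw [← card_compl_add S, ← comps_biUnion (G := G) S, card_biUnion (comps_disj S)]
  simp only [id]

lemma comp_dd {S C : Finset V} (h : C ∈ comps G S) : dd G C = E G C S := by
  unfold dd
  apply le_antisymm
  · have h1 : Cᶜ = S ∪ (Cᶜ \ S) := by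
      ext x; simp only [mem_compl, mem_union, mem_sdiff]
      constructor
      · intro hx; tauto
      · rintro (hx | hx)
        · exact fun hxC => comp_not h hxC hx
        · exact hx.1
    rw [h1, E_union_right disjoint_sdiff, E_eq_zero (X := C) (Y := Cᶜ \ S)]
    · rfl
    · intro x hx y hy hxy
      rw [mem_sdiff, mem_compl] at hy
      rcases comp_nb h hx hxy with h' | h' <;> tauto
  · apply E_mono (Subset.refl _)
    intro x hx
    rw [mem_compl]
    exact fun hxC => comp_not h hxC hx

lemma comps_edges (hreg : G.IsRegularOfDegree k) (S : Finset V) :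
    ∑ C ∈ comps G S, dd G C + E G S S = k * #S := by
  have h1 : ∑ C ∈ comps G S, dd G C = E G S Sᶜ := by
    rw [← comps_biUnion (G := G) S, E_biUnion_right _ _ (comps_disj S)]
    refine Finset.sum_congr rfl fun C hC => ?_
    rw [comp_dd hC, E_comm]; rfl
  rw [h1]
  exact dd_add hreg S

lemma comp_ne_univ {S C : Finset V} (h : C ∈ comps G S) (hS : S.Nonempty) : C ≠ univ := by
  rintro rfl
  obtain ⟨s, hs⟩ := hS
  exact comp_not h (mem_univ s) hs

lemma comp_compl {S C : Finset V} (h : C ∈ comps G S) : #S ≤ #Cᶜ := by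
  apply card_le_card
  intro x hx
  rw [mem_compl]
  exact fun hxC => comp_not h hxC hx

lemma dd_parity (hreg : G.IsRegularOfDegree k) {X : Finset V} (h : Odd #X) :
    dd G X % 2 = k % 2 := by
  have h1 := dd_add hreg X
  obtain ⟨r, hr⟩ := E_self_even (G := G) X
  obtain ⟨t, ht⟩ := h
  rw [hr, ht] at h1
  have : k * (2 * t + 1) = 2 * (k * t) + k := by ring
  omega

noncomputable def oc (G : SimpleGraph V) (S : Finset V) : ℕ := #((comps G S).filter fun C => Odd #C)
noncomputable def ev (G : SimpleGraph V) (S : Finset V) : ℕ := #((comps G S).filter fun C => ¬ Odd #C)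
noncomputable def tr (G : SimpleGraph V) (S : Finset V) : Finset (Finset V) :=
  (comps G S).filter fun C => #C = 1
noncomputable def bad (G : SimpleGraph V) [DecidableRel G.Adj] (k : ℕ) (S : Finset V) :
    Finset (Finset V) := (comps G S).filter fun C => 2 ≤ #C ∧ dd G C < 2 * k - 2
noncomputable def good (G : SimpleGraph V) [DecidableRel G.Adj] (k : ℕ) (S : Finset V) :
    Finset (Finset V) := (comps G S).filter fun C => 2 ≤ #C ∧ 2 * k - 2 ≤ dd G C

lemma oc_ev (S : Finset V) : oc G S + ev G S = #(comps G S) :=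
  card_filter_add_card_filter_not _

lemma oc_parity (hn : Even (Fintype.card V)) (S : Finset V) : Even (oc G S + #S) := by
  have h1 := comps_card (G := G) S
  have h2 := Finset.odd_sum_iff_odd_card_odd (s := comps G S) (fun C => #C)
  rw [← h1] at hn
  change _ ↔ Odd (oc G S) at h2
  rw [Nat.even_add] at hn ⊢
  rw [← hn, ← Nat.not_odd_iff_even, ← Nat.not_odd_iff_even, h2]

lemma comps_split (S : Finset V) : #(comps G S) = #(tr G S) + #(bad G k S) + #(good G k S) := by
  have h1 : comps G S = (tr G S ∪ bad G k S) ∪ good G k S := by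
    ext C
    simp only [tr, bad, good, mem_union, mem_filter]
    constructor
    · intro h
      have := (comp_ne h).card_pos
      by_cases h1 : #C = 1
      · tauto
      · have : 2 ≤ #C := by omega
        by_cases h2 : dd G C < 2 * k - 2
        · tauto
        · have : 2 * k - 2 ≤ dd G C := by omega
          tauto
    · tauto
  conv_lhs => rw [h1]
  rw [card_union_of_disjoint, card_union_of_disjoint]
  · rw [Finset.disjoint_left]
    intro C hC hC'
    rw [tr, mem_filter] at hC
    rw [bad, mem_filter] at hC'
    omega
  · rw [Finset.disjoint_left]
    intro C hC hC'
    rw [good, mem_filter] at hC'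
    rw [mem_union, tr, bad, mem_filter, mem_filter] at hC
    omega

/-- Edge accounting. -/
lemma acct (hconn : G.Connected) (ht : TransR G.Adj) (hreg : G.IsRegularOfDegree k) (hk : 5 ≤ k)
    {S : Finset V} (hS : S.Nonempty) (e : ℕ)
    (he : ∀ C ∈ good G k S, k + e ≤ dd G C) :
    k * #(comps G S) + e * #(good G k S) + E G S S ≤ k * #S := by
  rw [← comps_edges hreg S]
  have h1 : k * #(comps G S) + e * #(good G k S) =
      ∑ C ∈ comps G S, (k + if 2 ≤ #C ∧ 2 * k - 2 ≤ dd G C then e else 0) := by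
    rw [sum_add_distrib, sum_const, ← Finset.sum_filter, sum_const, smul_eq_mul, smul_eq_mul]
    unfold good; ring
  rw [h1]
  apply Nat.add_le_add_right
  refine Finset.sum_le_sum fun C hC => ?_
  split_ifs with h
  · exact he C (mem_filter.2 ⟨hC, h⟩)
  · exact dd_ge_k hconn ht hreg hk (comp_ne hC) (comp_ne_univ hC hS)

lemma acct' (hconn : G.Connected) (ht : TransR G.Adj) (hreg : G.IsRegularOfDegree k) (hk : 5 ≤ k)
    {S : Finset V} (hS : S.Nonempty) :
    k * #(comps G S) + (k - 2) * #(good G k S) + E G S S ≤ k * #S := by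
  refine acct hconn ht hreg hk hS (k - 2) fun C hC => ?_
  rw [good, mem_filter] at hC
  omega

open scoped Classical in
/-- The vertices forming trivial components. -/
noncomputable def trv (G : SimpleGraph V) (S : Finset V) : Finset V :=
  univ.filter fun v => v ∉ S ∧ ∀ w, G.Adj v w → w ∈ S

lemma mem_trv {S : Finset V} {v : V} : v ∈ trv G S ↔ v ∉ S ∧ ∀ w, G.Adj v w → w ∈ S := by
  simp [trv]

lemma trv_iff {S : Finset V} {v : V} : v ∈ trv G S ↔ {v} ∈ comps G S := by
  rw [mem_trv]
  constructor
  · rintro ⟨h1, h2⟩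
    refine mem_comps.2 ⟨singleton_nonempty v, ⟨by simpa using h1, ?_⟩, ?_⟩
    · intro x hx y hxy hy
      rw [mem_singleton] at hx; subst hx
      exact absurd (h2 y hxy) hy
    · intro Y hY hne _
      exact (Finset.Nonempty.subset_singleton_iff hne).1 hY
  · intro h
    refine ⟨comp_not h (mem_singleton_self v), fun w hw => ?_⟩
    rcases comp_nb h (mem_singleton_self v) hw with h' | h'
    · rw [mem_singleton] at h'; exact absurd h'.symm hw.ne
    · exact h'

lemma trv_card (S : Finset V) : #(trv G S) = #(tr G S) := by
  refine Finset.card_bij (fun v _ => {v}) ?_ ?_ ?_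
  · intro v hv
    rw [tr, mem_filter]
    exact ⟨trv_iff.1 hv, card_singleton v⟩
  · intro v _ w _ h
    simpa using h
  · intro C hC
    rw [tr, mem_filter, card_eq_one] at hC
    obtain ⟨hC, v, rfl⟩ := hC
    exact ⟨v, trv_iff.2 hC, rfl⟩

/-- In the `Alpha` situation, the vertices which matching edges carry into `S` from trivial
and bad components. -/
lemma Alpha.bad_sub {a : ℕ} {A : V → Finset V} {m : V → V} (h : Alpha G k a A m)
    (hreg : G.IsRegularOfDegree k) (hk : 5 ≤ k) {S : Finset V} (hS : 2 ≤ #S) {C : Finset V}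
    (hC : C ∈ bad G k S) {x : V} (hx : x ∈ C) : A x ⊆ C := by
  rw [bad, mem_filter] at hC
  by_contra hcon
  have := h.dd_cross hreg hk hC.2.1 (hS.trans (comp_compl hC.1)) hx hcon
  omega

lemma Alpha.count {a : ℕ} {A : V → Finset V} {m : V → V} (h : Alpha G k a A m)
    (hreg : G.IsRegularOfDegree k) (hk : 5 ≤ k) {S : Finset V} (hS : 2 ≤ #S) :
    #(tr G S) + a * #(bad G k S) ≤
      #(S.filter fun s => m s ∈ trv G S ∨ ∃ C ∈ bad G k S, m s ∈ C) := by
  classical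
  set U := trv G S ∪ (bad G k S).biUnion (fun C => C.filter fun c => m c ∈ S) with hU
  have hcard : #U = #(trv G S) + ∑ C ∈ bad G k S, #(C.filter fun c => m c ∈ S) := by
    rw [hU, card_union_of_disjoint, card_biUnion]
    · intro C hC D hD hne
      change Disjoint (C.filter fun c => m c ∈ S) (D.filter fun c => m c ∈ S)
      rw [Finset.disjoint_left]
      intro v hv hv'
      rw [mem_filter] at hv hv'
      exact hne (comp_eq (mem_filter.1 hC).1 (mem_filter.1 hD).1 hv.1 hv'.1)
    · rw [Finset.disjoint_left]
      intro v hv hv'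
      rw [mem_biUnion] at hv'
      obtain ⟨C, hC, hvC⟩ := hv'
      rw [mem_filter] at hvC
      rw [bad, mem_filter] at hC
      have := comp_eq (trv_iff.1 hv) hC.1 (mem_singleton_self v) hvC.1
      rw [← this, card_singleton] at hC
      omega
  have hge : ∀ C ∈ bad G k S, a ≤ #(C.filter fun c => m c ∈ S) := by
    intro C hC
    have hC' := hC
    rw [bad, mem_filter] at hC'
    have h1 := h.cut C hC'.2.1 (hS.trans (comp_compl hC'.1))
    refine h1.trans ?_
    rw [comp_dd hC'.1, E_eq, card_filter]
    refine Finset.sum_le_sum fun c hc => ?_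
    have hsub : nbv G c ∩ S ⊆ {m c} := by
      intro s hs
      rw [mem_inter, mem_nbv] at hs
      rw [mem_singleton]
      refine h.muniq c s hs.1 fun hs' => ?_
      exact comp_not hC'.1 (h.bad_sub hreg hk hS hC hc hs') hs.2
    split_ifs with hm
    · simpa using card_le_card hsub
    · rw [Nat.le_zero, card_eq_zero, eq_empty_iff_forall_notMem]
      intro s hs
      have := hsub hs
      rw [mem_singleton] at this
      subst this
      exact hm (mem_inter.1 hs).2
  have hsum : a * #(bad G k S) ≤ ∑ C ∈ bad G k S, #(C.filter fun c => m c ∈ S) := by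
    rw [mul_comm, ← smul_eq_mul, ← sum_const]
    exact Finset.sum_le_sum hge
  rw [← trv_card]
  refine le_trans (by omega : _ ≤ #U) ?_
  refine Finset.card_le_card_of_injOn m ?_ ?_
  · intro u hu
    rw [mem_coe, hU, mem_union, mem_biUnion] at hu
    rw [mem_coe, mem_filter, h.mm]
    rcases hu with hu | ⟨C, hC, hu⟩
    · exact ⟨(mem_trv.1 hu).2 _ (h.madj u), Or.inl hu⟩
    · rw [mem_filter] at hu
      exact ⟨hu.2, Or.inr ⟨C, hC, hu.1⟩⟩
  · intro u _ w _ huw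
    rw [← h.mm u, huw, h.mm]

/-- Combined count. -/
lemma MC (hconn : G.Connected) (ht : TransR G.Adj) (hreg : G.IsRegularOfDegree k) (hk : 5 ≤ k)
    {S : Finset V} (hS : 2 ≤ #S) (hb : bad G k S ≠ ∅) :
    ∃ a A m, Alpha G k a A m ∧ #(tr G S) + a * #(bad G k S) ≤ #S := by
  rcases cut_alt hconn ht hreg hk with h | ⟨a, A, m, h⟩
  · exfalso; apply hb
    rw [eq_empty_iff_forall_notMem]
    intro C hC
    rw [bad, mem_filter] at hC
    have := h C hC.2.1 (hS.trans (comp_compl hC.1))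
    omega
  · exact ⟨a, A, m, h, (h.count hreg hk hS).trans (card_le_card (filter_subset _ _))⟩

/-- bicriticality -/
lemma L3 (hconn : G.Connected) (ht : TransR G.Adj) (hreg : G.IsRegularOfDegree k) (hk : 5 ≤ k)
    (hnb : ¬ G.Colorable 2) (hn : Even (Fintype.card V)) {S : Finset V} (hS : 2 ≤ #S) :
    oc G S + 2 ≤ #S := by
  by_contra hcon
  have hpar := oc_parity (G := G) hn S
  have hge : #S ≤ oc G S := by
    obtain ⟨r, hr⟩ := hpar; omega
  have h1 := oc_ev (G := G) S
  have hSne : S.Nonempty := card_pos.1 (by omega)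
  have h2 := acct' hconn ht hreg hk hSne
  have h3 : #(comps G S) = #S := by
    have : k * #(comps G S) ≤ k * #S := by omega
    have := Nat.le_of_mul_le_mul_left this (by omega)
    omega
  rw [h3] at h2
  have hg : #(good G k S) = 0 := by
    rcases Nat.mul_eq_zero.1 (by omega : (k - 2) * #(good G k S) = 0) with h | h
    · omega
    · exact h
  have hE : E G S S = 0 := by omega
  have hsplit := comps_split (G := G) (k := k) S
  by_cases hb : bad G k S = ∅
  · rw [hb, card_empty] at hsplit
    apply hnb
    apply colorable_of S
    intro x y hxy
    constructor
    · intro hx hy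
      have := E_pos hx hy hxy
      omega
    · intro hy
      by_contra hx
      obtain ⟨C, hC, hxC⟩ := comp_cover (G := G) hx
      have hyC := (comp_nb hC hxC hxy).resolve_right hy
      have htr : tr G S = comps G S := eq_of_subset_of_card_le (filter_subset _ _) (by omega)
      rw [← htr, tr, mem_filter, card_eq_one] at hC
      obtain ⟨-, v, rfl⟩ := hC
      rw [mem_singleton] at hxC hyC
      exact hxy.ne (hxC.trans hyC.symm)
  · obtain ⟨a, A, m, hA, hc⟩ := MC hconn ht hreg hk hS hb
    have hpos : 0 < #(bad G k S) := card_pos.2 (nonempty_iff_ne_empty.2 hb)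
    have := hA.ka
    have : 2 * #(bad G k S) ≤ a * #(bad G k S) := Nat.mul_le_mul_right _ (by omega)
    omega

/-- level 2 sets have no even components -/
lemma L5 (hconn : G.Connected) (ht : TransR G.Adj) (hreg : G.IsRegularOfDegree k) (hk : 5 ≤ k)
    (hnb : ¬ G.Colorable 2) {S : Finset V} (hS : 3 ≤ #S) (hl : oc G S + 2 = #S) :
    ∀ C ∈ comps G S, Odd #C := by
  by_contra hcon
  push Not at hcon
  obtain ⟨C, hC, hCo⟩ := hcon
  have hev : 1 ≤ ev G S := card_pos.2 ⟨C, mem_filter.2 ⟨hC, hCo⟩⟩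
  have h1 := oc_ev (G := G) S
  have hSne : S.Nonempty := card_pos.1 (by omega)
  have h2 := acct' hconn ht hreg hk hSne
  have h3 : #(comps G S) + 2 = #S + ev G S := by omega
  have hsplit := comps_split (G := G) (k := k) S
  have hg1 : #(good G k S) ≤ 1 := by
    by_contra hg
    have e1 : k * (#S + 1) ≤ k * (#(comps G S) + 2) := Nat.mul_le_mul_left _ (by omega)
    have e2 : (k - 2) * 2 ≤ (k - 2) * #(good G k S) := Nat.mul_le_mul_left _ (by omega)
    rw [mul_add, mul_add] at e1
    omega
  have hb : bad G k S = ∅ := by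
    by_contra hb
    obtain ⟨a, A, m, hA, hc⟩ := MC hconn ht hreg hk (by omega) hb
    have hpos : 0 < #(bad G k S) := card_pos.2 (nonempty_iff_ne_empty.2 hb)
    have := hA.ka
    have : 4 * #(bad G k S) ≤ a * #(bad G k S) := Nat.mul_le_mul_right _ (by omega)
    omega
  rw [hb, card_empty] at hsplit
  have hev2 : ev G S ≤ #(good G k S) := by
    apply card_le_card
    intro D hD
    rw [mem_filter] at hD
    have hD1 : 2 ≤ #D := by
      have := (comp_ne hD.1).card_pos
      by_contra h
      exact hD.2 (by rw [show #D = 1 by omega]; exact odd_one)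
    rw [good, mem_filter]
    refine ⟨hD.1, hD1, ?_⟩
    by_contra h
    have : D ∈ bad G k S := by rw [bad, mem_filter]; exact ⟨hD.1, hD1, by omega⟩
    rw [hb] at this; simp at this
  have htr : #(trv G S) + 2 = #S := by rw [trv_card]; omega
  have hsub : nbR G.Adj (trv G S) ⊆ S := by
    intro w hw
    rw [mem_nbR] at hw
    obtain ⟨x, hx, hxw⟩ := hw
    exact (mem_trv.1 hx).2 w hxw
  have hne : (trv G S).Nonempty := card_pos.1 (by omega)
  have := F3 hconn ht hreg hk hnb hne (by
    intro h
    rw [h] at hsub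
    obtain ⟨x, hx⟩ := hne
    exact (mem_trv.1 hx).1 (hsub (mem_univ x)))
  have := card_le_card hsub
  omega

end FC

namespace FC
open SimpleGraph Finset
variable {V : Type*} [Fintype V] [DecidableEq V] {G : SimpleGraph V} [DecidableRel G.Adj] {k : ℕ}

lemma good_odd (hreg : G.IsRegularOfDegree k) (hk : k = 5) {S : Finset V}
    (hodd : ∀ C ∈ comps G S, Odd #C) : ∀ C ∈ good G k S, k + 4 ≤ dd G C := by
  intro C hC
  rw [good, mem_filter] at hC
  have := dd_parity hreg (hodd C hC.1)
  omega

/-- basic numeric consequences for level-2 sets -/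
lemma level_good (hconn : G.Connected) (ht : TransR G.Adj) (hreg : G.IsRegularOfDegree k)
    (hk : 5 ≤ k) (hnb : ¬ G.Colorable 2) {S : Finset V} (hS : 3 ≤ #S) (hl : oc G S + 2 = #S) :
    #(comps G S) + 2 = #S ∧ (k - 2) * #(good G k S) + E G S S ≤ 2 * k ∧ #(good G k S) ≤ 3 ∧
      (#(good G k S) = 3 → k = 6) := by
  have hodd := L5 hconn ht hreg hk hnb hS hl
  have hSne : S.Nonempty := card_pos.1 (by omega)
  have hev : ev G S = 0 := by
    unfold ev
    rw [card_eq_zero, eq_empty_iff_forall_notMem]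
    intro C hC
    rw [mem_filter] at hC
    exact hC.2 (hodd C hC.1)
  have h1 := oc_ev (G := G) S
  have hc : #(comps G S) + 2 = #S := by omega
  have h2 := acct' hconn ht hreg hk hSne
  rw [← hc, mul_add] at h2
  have h3 : (k - 2) * #(good G k S) + E G S S ≤ 2 * k := by omega
  have hg3 : #(good G k S) ≤ 3 := by
    by_contra h
    have : (k - 2) * 4 ≤ (k - 2) * #(good G k S) := Nat.mul_le_mul_left _ (by omega)
    omega
  refine ⟨hc, h3, hg3, fun hg => ?_⟩
  rw [hg] at h3
  by_cases h5 : k = 5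
  · have h4 := acct hconn ht hreg hk hSne 4 (good_odd hreg h5 hodd)
    rw [← hc, mul_add, hg] at h4
    omega
  · omega

lemma L6_nobad (hconn : G.Connected) (ht : TransR G.Adj) (hreg : G.IsRegularOfDegree k)
    (hk : 5 ≤ k) (hnb : ¬ G.Colorable 2) {S : Finset V} (hS : 3 ≤ #S) (hl : oc G S + 2 = #S) :
    bad G k S = ∅ := by
  by_contra hb
  obtain ⟨hc, hE, hg3, hg6⟩ := level_good hconn ht hreg hk hnb hS hl
  obtain ⟨a, A, m, hA, hcnt⟩ := MC hconn ht hreg hk (by omega) hb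
  have hpos : 0 < #(bad G k S) := card_pos.2 (nonempty_iff_ne_empty.2 hb)
  have hka := hA.ka
  have hsplit := comps_split (G := G) (k := k) S
  have hf1 : #(bad G k S) = 1 := by
    by_contra h
    have : 5 * #(bad G k S) ≤ a * #(bad G k S) := Nat.mul_le_mul_right _ (by omega)
    omega
  rw [hf1, mul_one] at hcnt
  have hak : a = k ∧ #(tr G S) + k = #S ∧ 2 ≤ #(good G k S) ∧ k ≤ 6 := by
    by_cases h3 : #(good G k S) = 3
    · have := hg6 h3; omega
    · omega
  obtain ⟨hak, htight, hg2, hk6⟩ := hak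
  subst hak
  have hcnt2 := hA.count hreg hk (by omega : 2 ≤ #S)
  rw [hf1, mul_one] at hcnt2
  have hfull := eq_of_subset_of_card_le (filter_subset (fun s => m s ∈ trv G S ∨
    ∃ C ∈ bad G a S, m s ∈ C) S) (by omega)
  have hms : ∀ s ∈ S, m s ∈ trv G S ∨ ∃ C ∈ bad G a S, m s ∈ C := by
    intro s hs
    rw [← hfull, mem_filter] at hs
    exact hs.2
  -- blocks are cliques
  have hcl : ∀ x y, y ∈ A x → y ≠ x → G.Adj x y := by
    intro x y hy hne
    have hsub : nbv G x ∩ A x ⊆ (A x).erase x := by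
      intro z hz
      rw [mem_inter, mem_nbv] at hz
      exact mem_erase.2 ⟨hz.1.ne', hz.2⟩
    have heq := eq_of_subset_of_card_le hsub (by
      rw [card_erase_of_mem (hA.self x), hA.card]
      have := hA.inner x
      omega)
    have : y ∈ nbv G x ∩ A x := by rw [heq]; exact mem_erase.2 ⟨hne, hy⟩
    exact mem_nbv.1 (mem_inter.1 this).1
  -- no trivial components
  have htr0 : #(tr G S) = 0 := by
    rw [← trv_card, card_eq_zero, eq_empty_iff_forall_notMem]
    intro v hv
    set K := (A v).erase v with hK
    have hKc : #K + 1 = a := by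
      rw [hK, card_erase_of_mem (hA.self v), hA.card]; omega
    have hKS : K ⊆ S := by
      intro y hy
      rw [hK, mem_erase] at hy
      exact (mem_trv.1 hv).2 y (hcl v y hy.2 hy.1)
    have hEK : #K * (#K - 1) ≤ E G K K := by
      rw [E_eq, ← smul_eq_mul, ← sum_const]
      refine Finset.sum_le_sum fun x hx => ?_
      rw [← card_erase_of_mem hx]
      apply card_le_card
      intro y hy
      rw [mem_erase] at hy
      refine mem_inter.2 ⟨mem_nbv.2 (hcl x y ?_ hy.1), hy.2⟩
      rw [hA.eq v x (mem_of_mem_erase hx)]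
      exact mem_of_mem_erase hy.2
    have hEle := E_mono (G := G) hKS hKS
    have hKa : #K = a - 1 := by omega
    rw [hKa] at hEK
    have : a = 5 ∨ a = 6 := by omega
    rcases this with rfl | rfl <;> omega
  have htrv : trv G S = ∅ := by rw [← card_eq_zero, trv_card, htr0]
  obtain ⟨C0, hC0⟩ := card_eq_one.1 hf1
  have hms : ∀ s ∈ S, m s ∈ C0 := by
    intro s hs
    rcases hms s hs with h | ⟨C, hC, h⟩
    · rw [htrv] at h; simp at h
    · rw [hC0, mem_singleton] at hC; rwa [hC] at h
  have hC0b : C0 ∈ bad G a S := by rw [hC0]; exact mem_singleton_self _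
  have hC0c : C0 ∈ comps G S := (mem_filter.1 hC0b).1
  have key : ∀ C ∈ good G a S, ∀ s ∈ S, ∃ x ∈ C, s ∈ A x := by
    intro C hC
    have hCc : C ∈ comps G S := (mem_filter.1 hC).1
    have hne : ∀ x ∈ C, x ∉ C0 := by
      intro x hx hx0
      have := comp_eq hCc hC0c hx hx0
      rw [this] at hC
      have h1 := (mem_filter.1 hC).2
      have h2 := (mem_filter.1 hC0b).2
      omega
    set W := C.biUnion A with hW
    have hWsub : ∀ w ∈ W, w ∈ C ∨ w ∈ S := by
      intro w hw
      rw [hW, mem_biUnion] at hw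
      obtain ⟨x, hx, hw⟩ := hw
      by_cases hwx : w = x
      · subst hwx; exact Or.inl hx
      · exact comp_nb hCc hx (hcl x w hw hwx)
    have hWA : ∀ w ∈ W, A w ⊆ W := by
      intro w hw
      rw [hW, mem_biUnion] at hw
      obtain ⟨x, hx, hw⟩ := hw
      rw [hA.eq x w hw]
      intro z hz
      exact mem_biUnion.2 ⟨x, hx, hz⟩
    have hCW : C ⊆ W := fun x hx => mem_biUnion.2 ⟨x, hx, hA.self x⟩
    have hdd : dd G W ≤ #(W ∩ S) := by
      unfold dd
      rw [E_eq]
      have : ∀ w ∈ W, #(nbv G w ∩ Wᶜ) ≤ if w ∈ S then 1 else 0 := by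
        intro w hw
        have hsub : nbv G w ∩ Wᶜ ⊆ {m w} := by
          intro y hy
          rw [mem_inter, mem_nbv, mem_compl] at hy
          rw [mem_singleton]
          exact hA.muniq w y hy.1 fun h => hy.2 (hWA w hw h)
        split_ifs with hwS
        · simpa using card_le_card hsub
        · rw [Nat.le_zero, card_eq_zero, eq_empty_iff_forall_notMem]
          intro y hy
          have hym := hsub hy
          rw [mem_singleton] at hym
          subst hym
          have hwC := (hWsub w hw).resolve_right hwS
          rcases comp_nb hCc hwC (hA.madj w) with h | h
          · exact (mem_compl.1 (mem_inter.1 hy).2) (hCW h)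
          · have := hms _ h
            rw [hA.mm] at this
            exact hne w hwC this
      refine (Finset.sum_le_sum this).trans ?_
      rw [← card_filter, ← filter_mem_eq_inter]
    have hWne : W.Nonempty := (comp_ne hCc).mono hCW
    have hWu : W ≠ univ := by
      intro h
      obtain ⟨z, hz⟩ := comp_ne hC0c
      rcases hWsub z (h ▸ mem_univ z) with h' | h'
      · exact hne z h' hz
      · exact comp_not hC0c hz h'
    have hge := dd_ge_k hconn ht hreg hk hWne hWu
    have hWS : W ∩ S = S := eq_of_subset_of_card_le inter_subset_right (by omega)
    intro s hs
    rw [← hWS, mem_inter, hW, mem_biUnion] at hs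
    exact hs.1
  obtain ⟨C1, hC1, C2, hC2, h12⟩ := one_lt_card.1 (by omega : 1 < #(good G a S))
  obtain ⟨s, hs⟩ : S.Nonempty := card_pos.1 (by omega)
  obtain ⟨x1, hx1, hs1⟩ := key C1 hC1 s hs
  obtain ⟨x2, hx2, hs2⟩ := key C2 hC2 s hs
  have hC1c := (mem_filter.1 hC1).1
  have hC2c := (mem_filter.1 hC2).1
  have hx12 : x2 ∈ A x1 := by
    rw [← hA.eq x1 s hs1, hA.eq x2 s hs2]; exact hA.self x2
  by_cases hxx : x2 = x1
  · subst hxx; exact h12 (comp_eq hC1c hC2c hx1 hx2)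
  · rcases comp_nb hC1c hx1 (hcl x1 x2 hx12 hxx) with h | h
    · exact h12 (comp_eq hC1c hC2c h hx2)
    · exact comp_not hC2c hx2 h

/-- Summary for level 2 sets. `q` is the number of nontrivial components. -/
lemma L6 (hconn : G.Connected) (ht : TransR G.Adj) (hreg : G.IsRegularOfDegree k)
    (hk : 5 ≤ k) (hnb : ¬ G.Colorable 2) {S : Finset V} (hS : 3 ≤ #S) (hl : oc G S + 2 = #S) :
    (∀ C ∈ comps G S, Odd #C) ∧ (∀ C ∈ comps G S, 2 ≤ #C → C ∈ good G k S) ∧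
    #(trv G S) + #(good G k S) + 2 = #S ∧
    (k - 2) * #(good G k S) + E G S S ≤ 2 * k ∧ #(good G k S) ≤ 3 ∧
      (#(good G k S) = 3 → k = 6) := by
  have hb := L6_nobad hconn ht hreg hk hnb hS hl
  obtain ⟨hc, hE, hg3, hg6⟩ := level_good hconn ht hreg hk hnb hS hl
  have hsplit := comps_split (G := G) (k := k) S
  rw [hb, card_empty] at hsplit
  refine ⟨L5 hconn ht hreg hk hnb hS hl, ?_, by rw [trv_card]; omega, hE, hg3, hg6⟩
  intro C hC h2
  rw [good, mem_filter]
  refine ⟨hC, h2, ?_⟩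
  by_contra h
  have : C ∈ bad G k S := by rw [bad, mem_filter]; exact ⟨hC, h2, by omega⟩
  rw [hb] at this; simp at this

end FC

namespace FC
open SimpleGraph Finset
variable {V : Type*} [Fintype V] [DecidableEq V] {G : SimpleGraph V} [DecidableRel G.Adj] {k : ℕ}

/-- Standing hypotheses. -/
structure Hyp (G : SimpleGraph V) [DecidableRel G.Adj] (k : ℕ) : Prop where
  conn : G.Connected
  tr : TransR G.Adj
  reg : G.IsRegularOfDegree k
  hk : 5 ≤ k
  nb : ¬ G.Colorable 2
  ev : Even (Fintype.card V)

/-- `S` is a level two set. -/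
def Lev (G : SimpleGraph V) (S : Finset V) : Prop := 3 ≤ #S ∧ oc G S + 2 = #S

/-- `S` is a maximal level two set. -/
def MaxLev (G : SimpleGraph V) (S : Finset V) : Prop :=
  Lev G S ∧ ∀ U, S ⊆ U → Lev G U → U = S

noncomputable def mtg (G : SimpleGraph V) (S T : Finset V) : Finset (Finset V) :=
  (comps G S).filter fun C => ¬ Disjoint C T

lemma inner_bound (H : Hyp G k) {S T C : Finset V} (hS : MaxLev G S) (hT : Lev G T)
    (hC : C ∈ mtg G S T) : #((comps G T).filter fun D => D ⊆ C) + 1 ≤ #(C ∩ T) := by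
  rw [mtg, mem_filter] at hC
  obtain ⟨hC, hCT⟩ := hC
  obtain ⟨hoS, -, -, -⟩ := L6 H.conn H.tr H.reg H.hk H.nb hS.1.1 hS.1.2
  obtain ⟨hoT, -, -, -⟩ := L6 H.conn H.tr H.reg H.hk H.nb hT.1 hT.2
  obtain ⟨hcS, -⟩ := level_good H.conn H.tr H.reg H.hk H.nb hS.1.1 hS.1.2
  set U := S ∪ (C ∩ T) with hU
  have hdis : Disjoint S (C ∩ T) := by
    rw [Finset.disjoint_left]
    intro x hx hx'
    exact comp_not hC (mem_inter.1 hx').1 hx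
  have hUc : #U = #S + #(C ∩ T) := card_union_of_disjoint hdis
  have hpos : 0 < #(C ∩ T) := by
    rw [card_pos, nonempty_iff_ne_empty, Ne, ← disjoint_iff_inter_eq_empty]; exact hCT
  have hUge := hS.1.1
  have hl3 := L3 H.conn H.tr H.reg H.hk H.nb H.ev (S := U) (by omega)
  have hpar := oc_parity (G := G) H.ev U
  have hne : oc G U + 2 ≠ #U := by
    intro h
    have := hS.2 U subset_union_left ⟨by omega, h⟩
    rw [this] at hUc
    omega
  have h4 : oc G U + 4 ≤ #U := by
    obtain ⟨r, hr⟩ := hpar; omega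
  have hsub : ((comps G S).erase C) ∪ ((comps G T).filter fun D => D ⊆ C) ⊆
      (comps G U).filter fun C => Odd #C := by
    intro D hD
    rw [mem_union, mem_erase, mem_filter] at hD
    rw [mem_filter]
    rcases hD with ⟨hDC, hD⟩ | ⟨hD, hDC⟩
    · refine ⟨comp_of hD ?_ ?_, hoS D hD⟩
      · intro x hx hxU
        rw [hU, mem_union, mem_inter] at hxU
        rcases hxU with h | h
        · exact comp_not hD hx h
        · exact hDC (comp_eq hD hC hx h.1)
      · intro x hx y hxy hy
        exact mem_union_left _ ((comp_nb hD hx hxy).resolve_left hy)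
    · refine ⟨comp_of hD ?_ ?_, hoT D hD⟩
      · intro x hx hxU
        rw [hU, mem_union, mem_inter] at hxU
        rcases hxU with h | h
        · exact comp_not hC (hDC hx) h
        · exact comp_not hD hx h.2
      · intro x hx y hxy hy
        have hyT := (comp_nb hD hx hxy).resolve_left hy
        rw [hU, mem_union, mem_inter]
        rcases comp_nb hC (hDC hx) hxy with h | h
        · exact Or.inr ⟨h, hyT⟩
        · exact Or.inl h
  have hcard := card_le_card hsub
  rw [card_union_of_disjoint, card_erase_of_mem hC] at hcard
  · change _ ≤ oc G U at hcard
    omega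
  · rw [Finset.disjoint_left]
    intro D hD hD'
    rw [mem_erase] at hD
    rw [mem_filter] at hD'
    obtain ⟨x, hx⟩ := comp_ne hD'.1
    exact hD.1 (comp_eq hD.2 hC hx (hD'.2 hx))

lemma comp_in {S T C D : Finset V} (hC : C ∈ comps G S) (hD : D ∈ comps G T) (hDS : Disjoint D S)
    {v : V} (hvC : v ∈ C) (hvD : v ∈ D) : D ⊆ C := by
  have hcl : Cl G T (D ∩ C) := by
    refine ⟨fun x hx => comp_not hD (mem_inter.1 hx).1, fun x hx y hxy hy => ?_⟩
    rw [mem_inter] at hx ⊢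
    have hyD := (comp_nb hD hx.1 hxy).resolve_right hy
    exact ⟨hyD, (comp_nb hC hx.2 hxy).resolve_right (Finset.disjoint_left.1 hDS hyD)⟩
  exact (comp_sub hD hcl hvD (mem_inter.2 ⟨hvD, hvC⟩)).trans inter_subset_right

lemma uncross_ineq (H : Hyp G k) {S T : Finset V} (hS : MaxLev G S) (hT : Lev G T) :
    #(S ∩ T) + #(mtg G S T) ≤ #(mtg G T S) + #(comps G S ∩ comps G T) + 2 := by
  obtain ⟨hcT, -⟩ := level_good H.conn H.tr H.reg H.hk H.nb hT.1 hT.2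
  have hsub : comps G T ⊆ (mtg G T S ∪ (comps G S ∩ comps G T)) ∪
      (mtg G S T).biUnion (fun C => (comps G T).filter fun D => D ⊆ C) := by
    intro D hD
    rw [mem_union, mem_union]
    by_cases hDS : Disjoint D S
    · obtain ⟨v, hv⟩ := comp_ne hD
      obtain ⟨C, hC, hvC⟩ := comp_cover (G := G) (Finset.disjoint_left.1 hDS hv)
      have hDC := comp_in hC hD hDS hvC hv
      by_cases hCT : Disjoint C T
      · have hCD := comp_in hD hC hCT hv hvC
        have : C = D := Subset.antisymm hCD hDC
        subst this
        exact Or.inl (Or.inr (mem_inter.2 ⟨hC, hD⟩))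
      · exact Or.inr (mem_biUnion.2 ⟨C, mem_filter.2 ⟨hC, hCT⟩, mem_filter.2 ⟨hD, hDC⟩⟩)
    · exact Or.inl (Or.inl (mem_filter.2 ⟨hD, hDS⟩))
  have h1 := card_le_card hsub
  have h2 := card_union_le (mtg G T S ∪ (comps G S ∩ comps G T))
    ((mtg G S T).biUnion (fun C => (comps G T).filter fun D => D ⊆ C))
  have h3 := card_union_le (mtg G T S) (comps G S ∩ comps G T)
  have h4 : #((mtg G S T).biUnion (fun C => (comps G T).filter fun D => D ⊆ C)) + #(mtg G S T) ≤
      #(T \ S) := by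
    have e1 := card_biUnion_le (s := mtg G S T) (t := fun C => (comps G T).filter fun D => D ⊆ C)
    have e2 : ∑ C ∈ mtg G S T, (#((comps G T).filter fun D => D ⊆ C) + 1) ≤
        ∑ C ∈ mtg G S T, #(C ∩ T) := Finset.sum_le_sum fun C hC => inner_bound H hS hT hC
    rw [sum_add_distrib, sum_const, smul_eq_mul, mul_one] at e2
    have e3 : ∑ C ∈ mtg G S T, #(C ∩ T) ≤ #(T \ S) := by
      rw [← card_biUnion]
      · apply card_le_card
        intro x hx
        rw [mem_biUnion] at hx
        obtain ⟨C, hC, hx⟩ := hx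
        rw [mem_inter] at hx
        exact mem_sdiff.2 ⟨hx.2, comp_not (mem_filter.1 hC).1 hx.1⟩
      · intro C hC D hD hne
        change Disjoint (C ∩ T) (D ∩ T)
        rw [Finset.disjoint_left]
        intro x hx hx'
        exact hne (comp_eq (mem_filter.1 hC).1 (mem_filter.1 hD).1 (mem_inter.1 hx).1
          (mem_inter.1 hx').1)
    omega
  have h5 := card_sdiff_add_card_inter T S
  rw [inter_comm] at h5
  omega

lemma L7 (H : Hyp G k) {S T : Finset V} (hS : MaxLev G S) (hT : MaxLev G T) (hne : S ≠ T) :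
    #(S ∩ T) ≤ 2 ∧ (#(S ∩ T) = 2 → #(mtg G S T) = #(mtg G T S)) := by
  have h1 := uncross_ineq H hS hT.1
  have h2 := uncross_ineq H hT hS.1
  rw [inter_comm T S, inter_comm (comps G T)] at h2
  obtain ⟨hoS, -, -, -⟩ := L6 H.conn H.tr H.reg H.hk H.nb hS.1.1 hS.1.2
  have hsub : comps G S ∩ comps G T ⊆ (comps G (S ∩ T)).filter fun C => Odd #C := by
    intro D hD
    rw [mem_inter] at hD
    rw [mem_filter]
    refine ⟨comp_of hD.1 ?_ ?_, hoS D hD.1⟩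
    · intro x hx hx'
      exact comp_not hD.1 hx (mem_inter.1 hx').1
    · intro x hx y hxy hy
      exact mem_inter.2 ⟨(comp_nb hD.1 hx hxy).resolve_left hy,
        (comp_nb hD.2 hx hxy).resolve_left hy⟩
  have h3 : #(comps G S ∩ comps G T) ≤ oc G (S ∩ T) := card_le_card hsub
  have hle : #(S ∩ T) ≤ 2 := by
    by_contra hcon
    have h4 := L3 H.conn H.tr H.reg H.hk H.nb H.ev (S := S ∩ T) (by omega)
    have heq : oc G (S ∩ T) + 2 = #(S ∩ T) := by omega
    have hodd := L5 H.conn H.tr H.reg H.hk H.nb (S := S ∩ T) (by omega) heq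
    have hall := eq_of_subset_of_card_le hsub (by change oc G (S ∩ T) ≤ _; omega)
    have hST : ¬ S ⊆ T := fun h => hne (hS.2 T h hT.1).symm
    obtain ⟨s, hs, hsT⟩ := Finset.not_subset.1 hST
    obtain ⟨D, hD, hsD⟩ := comp_cover (G := G) (S := S ∩ T) (v := s)
      (fun h => hsT (mem_inter.1 h).2)
    have : D ∈ comps G S ∩ comps G T := by
      rw [hall, mem_filter]; exact ⟨hD, hodd D hD⟩
    exact comp_not (mem_inter.1 this).1 hsD hs
  refine ⟨hle, fun h2' => ?_⟩
  have h4 := L3 H.conn H.tr H.reg H.hk H.nb H.ev (S := S ∩ T) (by omega)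
  omega

lemma caseI (H : Hyp G k) {S : Finset V} (h4 : 4 ≤ #S) (hl : oc G S + 2 = #S) :
    (trv G S).Nonempty := by
  by_contra hcon
  rw [not_nonempty_iff_eq_empty] at hcon
  obtain ⟨hodd, hgood, hcnt, hE, hg3, hg6⟩ := L6 H.conn H.tr H.reg H.hk H.nb (by omega) hl
  rw [hcon, card_empty] at hcnt
  obtain ⟨C1, hC1, C2, hC2, h12⟩ := one_lt_card.1 (by omega : 1 < #(good G k S))
  have hC1 := (mem_filter.1 hC1).1
  have hC2 := (mem_filter.1 hC2).1
  have hk := H.hk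
  obtain ⟨x2, hx2⟩ := comp_ne hC2
  obtain ⟨-, k2, k3⟩ := kappa H.conn H.tr H.reg H.hk (X := C1) (S := S) (comp_ne hC1)
    (fun x hx y hxy => comp_nb hC1 hx hxy)
    ⟨x2, fun h => h12 (comp_eq hC1 hC2 h hx2), comp_not hC2 hx2⟩
  have hk5 : k = 5 := by
    by_contra h
    have := k2 (by omega)
    have := hg6
    omega
  have hs4 : #S = 4 := by
    have := hg6
    omega
  obtain ⟨A, hA1, hA2, hA3, hA4⟩ := k3 hk5 (by omega)
  obtain ⟨c, hc, hcA⟩ : ∃ c ∈ C1, ¬ A c ⊆ C1 := by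
    by_contra hall
    push Not at hall
    have h1 : #C1 = ∑ B ∈ C1.image A, 2 := by
      rw [card_eq_sum_card_image A C1]
      refine Finset.sum_congr rfl fun B hB => ?_
      obtain ⟨c, hc, rfl⟩ := mem_image.1 hB
      rw [← hA3 c]
      congr 1
      ext y
      rw [mem_filter]
      constructor
      · rintro ⟨_, h⟩; rw [← h]; exact hA1 y
      · intro hy; exact ⟨hall c hc hy, hA2 c y hy⟩
    rw [sum_const, smul_eq_mul] at h1
    have := hodd C1 hC1
    rw [h1] at this
    exact (Nat.not_odd_iff_even.2 (Even.mul_left even_two _)) this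
  obtain ⟨c', hc', hcC⟩ := Finset.not_subset.1 hcA
  have hcc : cl G c c' := (hA4 c c' hc' c').2 (Or.inl rfl)
  have hc'S : c' ∈ S := by
    rcases hcc with rfl | h
    · exact absurd hc hcC
    · exact (comp_nb hC1 hc h).resolve_left hcC
  have : ∃ y ∈ C2, G.Adj c' y := by
    by_contra hno
    push Not at hno
    have := (kappa H.conn H.tr H.reg H.hk (X := C2) (S := S.erase c') (comp_ne hC2)
      (fun x hx y hxy => by
        rcases comp_nb hC2 hx hxy with h | h
        · exact Or.inl h
        · refine Or.inr (mem_erase.2 ⟨?_, h⟩)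
          rintro rfl
          exact hno x hx hxy.symm)
      ⟨c, fun h => h12 (comp_eq hC1 hC2 hc h), fun h => comp_not hC1 hc (mem_of_mem_erase h)⟩).1
    rw [card_erase_of_mem hc'S] at this
    omega
  obtain ⟨y, hy, hcy⟩ := this
  rcases (hA4 c c' hc' y).2 (Or.inr hcy) with rfl | h
  · exact h12 (comp_eq hC1 hC2 hc hy)
  · rcases comp_nb hC1 hc h with h' | h'
    · exact h12 (comp_eq hC1 hC2 h' hy)
    · exact comp_not hC2 hy h'

/-! transport -/
lemma Cl_mp {φ : Equiv.Perm V} (h : AutR G.Adj φ) {S X : Finset V} (hX : Cl G S X) :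
    Cl G (mp φ S) (mp φ X) := by
  refine ⟨fun x hx => ?_, fun x hx y hxy hy => ?_⟩
  · rw [mem_mp] at hx ⊢; exact hX.1 _ hx
  · rw [mem_mp] at hx hy ⊢
    exact hX.2 _ hx _ ((h.symm x y).2 hxy) hy

lemma comps_mp {φ : Equiv.Perm V} (h : AutR G.Adj φ) {S C : Finset V} (hC : C ∈ comps G S) :
    mp φ C ∈ comps G (mp φ S) := by
  rw [mem_comps] at hC ⊢
  refine ⟨by simpa using hC.1, Cl_mp h hC.2.1, fun Y hY hne hcl => ?_⟩
  have h1 := Cl_mp h.symm hcl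
  rw [mp_symm] at h1
  have h2 := hC.2.2 (mp φ.symm Y) (by
    intro y hy
    rw [mem_mp] at hy
    have := hY hy
    rw [mem_mp] at this
    simpa using this) (by simpa using hne) h1
  rw [← h2, mp_symm']

lemma oc_mp {φ : Equiv.Perm V} (h : AutR G.Adj φ) (S : Finset V) : oc G (mp φ S) = oc G S := by
  symm
  unfold oc
  refine Finset.card_bij (fun X _ => mp φ X) ?_ ?_ ?_
  · intro X hX
    rw [mem_filter] at hX ⊢
    exact ⟨comps_mp h hX.1, by simpa using hX.2⟩
  · intro X _ Y _ hXY
    exact mp_inj hXY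
  · intro Y hY
    rw [mem_filter] at hY
    refine ⟨mp φ.symm Y, ?_, mp_symm'⟩
    rw [mem_filter]
    have := comps_mp h.symm hY.1
    rw [mp_symm] at this
    exact ⟨this, by simpa using hY.2⟩

lemma Lev_mp {φ : Equiv.Perm V} (h : AutR G.Adj φ) {S : Finset V} (hS : Lev G S) :
    Lev G (mp φ S) := by
  unfold Lev at *
  rw [oc_mp h, card_map]; exact hS

lemma MaxLev_mp {φ : Equiv.Perm V} (h : AutR G.Adj φ) {S : Finset V} (hS : MaxLev G S) :
    MaxLev G (mp φ S) := by
  refine ⟨Lev_mp h hS.1, fun U hU hUl => ?_⟩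
  have := hS.2 (mp φ.symm U) (by
    intro x hx
    rw [mem_mp]
    exact hU (by rw [mem_mp]; simpa using hx)) (Lev_mp h.symm hUl)
  rw [← this, mp_symm']

end FC

namespace FC
open SimpleGraph Finset
variable {V : Type*} [Fintype V] [DecidableEq V] {G : SimpleGraph V} [DecidableRel G.Adj] {k : ℕ}

structure Sys (G : SimpleGraph V) [DecidableRel G.Adj] (k : ℕ) (A S : V → Finset V) (b s q r : ℕ) :
    Prop where
  mem : ∀ x, x ∈ A x
  eqA : ∀ x y, y ∈ A x → A y = A x
  eqS : ∀ x y, A y = A x → S y = S x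
  trv : ∀ x, A x = trv G (S x)
  nb : ∀ x w, w ∈ S x ↔ ∃ y ∈ A x, G.Adj y w
  mx : ∀ x, MaxLev G (S x)
  sep : ∀ x y, y ∉ A x → #(S x ∩ S y) ≤ 2
  sepm : ∀ x y, y ∉ A x → #(S x ∩ S y) = 2 → #(mtg G (S x) (S y)) = #(mtg G (S y) (S x))
  cA : ∀ x, #(A x) = b
  cS : ∀ x, #(S x) = s
  cq : ∀ x, #(good G k (S x)) = q
  cnt : ∀ w, #((nbv G w).image A) = r
  eqv : ∀ φ, AutR G.Adj φ → ∀ x, A (φ x) = mp φ (A x)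

lemma good_mp (H : Hyp G k) {φ : Equiv.Perm V} (h : AutR G.Adj φ) (S : Finset V) :
    #(good G k (mp φ S)) = #(good G k S) := by
  symm
  unfold good
  refine Finset.card_bij (fun X _ => mp φ X) ?_ ?_ ?_
  · intro X hX
    rw [mem_filter] at hX ⊢
    rw [dd_mp h, card_map]
    exact ⟨comps_mp h hX.1, hX.2⟩
  · intro X _ Y _ hXY
    exact mp_inj hXY
  · intro Y hY
    rw [mem_filter] at hY
    refine ⟨mp φ.symm Y, ?_, mp_symm'⟩
    rw [mem_filter, dd_mp h.symm, card_map]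
    have := comps_mp h.symm hY.1
    rw [mp_symm] at this
    exact ⟨this, hY.2⟩

lemma trv_mp {φ : Equiv.Perm V} (h : AutR G.Adj φ) (S : Finset V) :
    trv G (mp φ S) = mp φ (trv G S) := by
  ext x
  rw [mem_mp, mem_trv, mem_trv, mem_mp]
  refine and_congr Iff.rfl ⟨fun h1 w hw => ?_, fun h1 w hw => ?_⟩
  · have := h1 (φ w) (by rw [← h.symm]; simpa using hw)
    rwa [apply_mem_mp] at this
  · rw [mem_mp]
    exact h1 _ ((h.symm x w).2 hw)

lemma exists_sys (H : Hyp G k) {M : Finset V} (hM : MaxLev G M) {u : V} (hu : u ∈ trv G M) :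
    ∃ A S b s q r, Sys G k A S b s q r ∧ s = b + 2 + q ∧ s = r * b ∧ k ≤ s ∧
      1 ≤ q ∧ q ≤ 3 ∧ (q = 3 → k = 6) ∧ 0 < b ∧ b + 3 ≤ s := by
  choose φ hφ hφu using fun v => H.tr u v
  obtain ⟨S, hmax, htrv⟩ : ∃ S : V → Finset V, (∀ v, MaxLev G (S v)) ∧ ∀ v, v ∈ trv G (S v) := by
    refine ⟨fun v => mp (φ v) M, fun v => MaxLev_mp (hφ v) hM, fun v => ?_⟩
    change v ∈ trv G (mp (φ v) M)
    rw [trv_mp (hφ v), mem_mp]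
    have : (φ v).symm v = u := by rw [Equiv.symm_apply_eq]; exact (hφu v).symm
    rwa [this]
  have hnbS : ∀ T v, v ∈ trv G T → nbv G v ⊆ T := by
    intro T v hv w hw
    rw [mem_trv] at hv
    exact hv.2 w (mem_nbv.1 hw)
  have huniq : ∀ T v, MaxLev G T → v ∈ trv G T → T = S v := by
    intro T v hT hv
    by_contra hne
    have h1 := (L7 H hT (hmax v) hne).1
    have h2 : nbv G v ⊆ T ∩ S v := subset_inter (hnbS T v hv) (hnbS _ v (htrv v))
    have h3 := card_le_card h2
    rw [card_nbv H.reg] at h3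
    have := H.hk
    omega
  have hSeq : ∀ x y, y ∈ trv G (S x) → S y = S x := fun x y hy => (huniq _ _ (hmax x) hy).symm
  set A : V → Finset V := fun v => trv G (S v) with hA
  have hSmp : ∀ ψ, AutR G.Adj ψ → ∀ x, S (ψ x) = mp ψ (S x) := by
    intro ψ hψ x
    refine (huniq _ _ (MaxLev_mp hψ (hmax x)) ?_).symm
    rw [trv_mp hψ, apply_mem_mp]
    exact htrv x
  have hAmp : ∀ ψ, AutR G.Adj ψ → ∀ x, A (ψ x) = mp ψ (A x) := by
    intro ψ hψ x
    simp only [hA]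
    rw [hSmp ψ hψ, trv_mp hψ]
  have hAeq : ∀ x y, y ∈ A x → A y = A x := by
    intro x y hy
    simp only [hA]
    rw [hSeq x y hy]
  have hAS : ∀ x y, A y = A x → S y = S x := by
    intro x y h
    apply hSeq
    have := htrv y
    change y ∈ A y at this
    rw [h] at this
    exact this
  have hcA : ∀ x, #(A x) = #(A u) := by
    intro x
    conv_lhs => rw [← hφu x]
    rw [hAmp _ (hφ x), card_map]
  have hcS : ∀ x, #(S x) = #(S u) := by
    intro x
    conv_lhs => rw [← hφu x]
    rw [hSmp _ (hφ x), card_map]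
  have hcq : ∀ x, #(good G k (S x)) = #(good G k (S u)) := by
    intro x
    conv_lhs => rw [← hφu x]
    rw [hSmp _ (hφ x), good_mp H (hφ x)]
  obtain ⟨-, -, hcnt, hE, hg3, hg6⟩ := L6 H.conn H.tr H.reg H.hk H.nb (hmax u).1.1 (hmax u).1.2
  have hkk := H.hk
  have hbs : BlockSys G.Adj (orb G.Adj (A u)) #(A u) := by
    refine orb_blockSys H.tr ⟨u, htrv u⟩ ?_
    rintro ψ hψ ⟨v, hv, hv'⟩
    rw [← hAmp ψ hψ] at hv' ⊢
    rw [← hAeq _ _ hv', hAeq _ _ hv]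
  have horb : ∀ X, X ∈ orb G.Adj (A u) ↔ ∃ x, X = A x := by
    intro X
    rw [mem_orb]
    constructor
    · rintro ⟨ψ, hψ, rfl⟩
      exact ⟨ψ u, (hAmp ψ hψ u).symm⟩
    · rintro ⟨x, rfl⟩
      exact ⟨φ x, hφ x, by rw [← hAmp _ (hφ x), hφu]⟩
  have hAne : ∀ x, x ∈ A x := htrv
  obtain ⟨r, hr, hr'⟩ := hbs.count H.tr (fun X => nbR G.Adj X) #(nbR G.Adj (A u))
    (fun ψ hψ X hX => nbR_mp hψ X) (by
      intro X hX
      obtain ⟨ψ, hψ, rfl⟩ := mem_orb.1 hX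
      rw [nbR_mp hψ, card_map]) ⟨u⟩
  have hex : ∀ X ∈ orb G.Adj (A u), ∀ x, X = A x → (if h : ∃ x, X = A x then S h.choose else ∅) = S x := by
    intro X hX x hx
    have h : ∃ x, X = A x := ⟨x, hx⟩
    rw [dif_pos h]
    exact hAS _ _ (h.choose_spec.symm.trans hx)
  obtain ⟨r2, hr2, -⟩ := hbs.count H.tr
    (fun X => if h : ∃ x, X = A x then S h.choose else ∅) #(S u)
    (by
      intro ψ hψ X hX
      obtain ⟨x, rfl⟩ := (horb X).1 hX
      rw [hex _ hX x rfl, ← hAmp ψ hψ, hex _ ((horb _).2 ⟨_, rfl⟩) (ψ x) rfl, hSmp ψ hψ])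
    (by
      intro X hX
      obtain ⟨x, rfl⟩ := (horb X).1 hX
      rw [hex _ hX x rfl]
      exact hcS x) ⟨u⟩
  have hsub : ∀ x, nbR G.Adj (A x) ⊆ S x := by
    intro x w hw
    rw [mem_nbR] at hw
    obtain ⟨y, hy, hyw⟩ := hw
    exact hnbS _ _ hy (mem_nbv.2 hyw)
  have hF3 := F3 H.conn H.tr H.reg H.hk H.nb (X := A u) ⟨u, hAne u⟩ (by
    intro h
    have : u ∈ nbR G.Adj (A u) := by rw [h]; exact mem_univ u
    exact (mem_trv.1 (htrv u)).1 (hsub u this))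
  have hts := card_le_card (hsub u)
  have hkt : k ≤ #(nbR G.Adj (A u)) := by
    rw [← card_nbv H.reg u]
    apply card_le_card
    intro w hw
    rw [mem_nbR]
    exact ⟨u, hAne u, mem_nbv.1 hw⟩
  have hb0 : 0 < #(A u) := card_pos.2 ⟨u, hAne u⟩
  change #(A u) + _ + 2 = _ at hcnt
  have hq : #(good G k (S u)) ≤ 3 := hg3
  have hteq : #(nbR G.Adj (A u)) = #(S u) := by
    generalize #(nbR G.Adj (A u)) = t at *
    generalize #(good G k (S u)) = q at *
    generalize #(S u) = s at *
    generalize #(A u) = b at *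
    have hb5 : b ≤ 5 := by
      have : b ∣ 2 + q := by
        have h1 : b ∣ s := ⟨r2, by rw [hr2]; ring⟩
        have h2 : b ∣ b + (2 + q) := by convert h1 using 1; omega
        exact (Nat.dvd_add_right (dvd_refl b)).1 h2
      have := Nat.le_of_dvd (by omega) this
      omega
    have : q = 0 ∨ q = 1 ∨ q = 2 ∨ q = 3 := by omega
    interval_cases b <;> omega
  have hNS : ∀ x, nbR G.Adj (A x) = S x := by
    intro x
    apply eq_of_subset_of_card_le (hsub x)
    rw [hcS, ← hteq]
    conv_rhs => rw [← hφu x]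
    rw [hAmp _ (hφ x), nbR_mp (hφ x), card_map]
  refine ⟨A, S, #(A u), #(S u), #(good G k (S u)), r, ⟨hAne, hAeq, hAS, fun _ => rfl, ?_, hmax,
    ?_, ?_, hcA, hcS, hcq, ?_, hAmp⟩, by omega, by rw [← hteq]; exact hr, by omega, by omega, hq,
    hg6, hb0, by omega⟩
  · intro x w
    rw [← hNS, mem_nbR]
  · intro x y hy
    exact (L7 H (hmax x) (hmax y) (fun h => hy (by
      change y ∈ trv G (S x); rw [h]; exact htrv y))).1
  · intro x y hy
    exact (L7 H (hmax x) (hmax y) (fun h => hy (by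
      change y ∈ trv G (S x); rw [h]; exact htrv y))).2
  · intro w
    rw [← hr' w]
    congr 1
    ext X
    rw [mem_image, mem_filter, horb]
    constructor
    · rintro ⟨y, hy, rfl⟩
      exact ⟨⟨y, rfl⟩, mem_nbR.2 ⟨y, hAne y, (mem_nbv.1 hy).symm⟩⟩
    · rintro ⟨⟨x, rfl⟩, hw⟩
      obtain ⟨y, hy, hyw⟩ := mem_nbR.1 hw
      exact ⟨y, mem_nbv.2 hyw.symm, hAeq _ _ hy⟩

end FC

namespace FC
open SimpleGraph Finset
variable {V : Type*} [Fintype V] [DecidableEq V] {G : SimpleGraph V} [DecidableRel G.Adj] {k : ℕ}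
variable {A S : V → Finset V} {b s q r : ℕ}

lemma Sys.nS (h : Sys G k A S b s q r) {u w : V} (hw : G.Adj u w) : w ∈ S u :=
  (h.nb u w).2 ⟨u, h.mem u, hw⟩

lemma Sys.nS' (h : Sys G k A S b s q r) (u : V) : nbv G u ⊆ S u :=
  fun _ hw => h.nS (mem_nbv.1 hw)

lemma Sys.symA (h : Sys G k A S b s q r) {x y : V} (hy : y ∈ A x) : x ∈ A y := by
  rw [h.eqA _ _ hy]; exact h.mem x

lemma Sys.notS (h : Sys G k A S b s q r) {x y : V} (hy : y ∈ A x) : y ∉ S x := by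
  rw [h.trv] at hy
  exact (mem_trv.1 hy).1

lemma Sys.disj (h : Sys G k A S b s q r) {x y : V} (hy : y ∉ A x) : Disjoint (A x) (A y) := by
  rw [Finset.disjoint_left]
  intro z hz hz'
  exact hy (by rw [← h.eqA _ _ hz, h.eqA _ _ hz']; exact h.mem y)

lemma Sys.indep (h : Sys G k A S b s q r) {x y z : V} (hy : y ∈ A x) (hz : z ∈ A x) :
    ¬ G.Adj y z := by
  intro hyz
  exact h.notS hz ((h.nb x z).2 ⟨y, hy, hyz⟩)

lemma Sys.star (h : Sys G k A S b s q r) {u v : V} (hu : u ∉ A v) : #(nbv G u ∩ S v) ≤ 2 := by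
  refine le_trans (card_le_card ?_) (h.sep v u hu)
  intro w hw
  rw [mem_inter] at hw ⊢
  exact ⟨hw.2, h.nS' u hw.1⟩

lemma Sys.common (h : Sys G k A S b s q r) (H : Hyp G k) {u v : V} (hu : u ∈ A v) :
    2 * k ≤ #(nbv G u ∩ nbv G v) + s := by
  have h1 := card_union_add_card_inter (nbv G u) (nbv G v)
  rw [card_nbv H.reg, card_nbv H.reg] at h1
  have h2 : nbv G u ∪ nbv G v ⊆ S v := by
    apply union_subset _ (h.nS' v)
    rw [← h.eqS v u (h.eqA _ _ hu)]
    exact h.nS' u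
  have h3 := card_le_card h2
  rw [h.cS] at h3
  omega

lemma Sys.case3 (h : Sys G k A S 3 6 q 2) (H : Hyp G k) (v : V) : False := by
  have hk := H.hk
  have key : ∀ w ∈ A v, (nbv G w).image A = (nbv G v).image A := by
    intro w hw
    have h1 := h.common H hw
    have h2 : 2 ≤ #((nbv G w ∩ nbv G v).image A) := by
      by_contra hlt
      have h3 : ∃ P, (nbv G w ∩ nbv G v) ⊆ P ∧ #P ≤ 3 := by
        obtain ⟨x, hx⟩ : (nbv G w ∩ nbv G v).Nonempty := card_pos.1 (by omega)
        refine ⟨A x, fun y hy => ?_, (h.cA x).le⟩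
        have := card_le_one.1 (by omega : #((nbv G w ∩ nbv G v).image A) ≤ 1) _
          (mem_image_of_mem A hx) _ (mem_image_of_mem A hy)
        rw [this]; exact h.mem y
      obtain ⟨P, hP, hP3⟩ := h3
      have := card_le_card hP
      omega
    have h4 : (nbv G w ∩ nbv G v).image A = (nbv G w).image A :=
      eq_of_subset_of_card_le (image_subset_image inter_subset_left) (by rw [h.cnt]; exact h2)
    have h5 : (nbv G w ∩ nbv G v).image A = (nbv G v).image A :=
      eq_of_subset_of_card_le (image_subset_image inter_subset_right) (by rw [h.cnt]; exact h2)
    rw [← h4, h5]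
  obtain ⟨P, hP, Q, hQ, hPQ⟩ := one_lt_card.1 (by rw [h.cnt]; omega : 1 < #((nbv G v).image A))
  obtain ⟨x, hx, rfl⟩ := mem_image.1 hP
  obtain ⟨y, hy, rfl⟩ := mem_image.1 hQ
  have hsub : A v ⊆ S x ∩ S y := by
    intro w hw
    rw [← key w hw] at hP hQ
    obtain ⟨x', hx', hxx⟩ := mem_image.1 hP
    obtain ⟨y', hy', hyy⟩ := mem_image.1 hQ
    rw [mem_inter, ← h.eqS _ _ hxx, ← h.eqS _ _ hyy]
    exact ⟨h.nS (mem_nbv.1 hx').symm, h.nS (mem_nbv.1 hy').symm⟩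
  have h1 := card_le_card hsub
  have h2 := h.sep x y (fun hc => hPQ (h.eqA _ _ hc).symm)
  rw [h.cA] at h1
  omega

/-- `C` is a smallest nontrivial component of all graphs `G - S v`. -/
structure MinC (G : SimpleGraph V) (S : V → Finset V) (v : V) (C : Finset V) : Prop where
  mem : C ∈ comps G (S v)
  two : 2 ≤ #C
  min : ∀ w, ∀ D ∈ comps G (S w), 2 ≤ #D → #C ≤ #D

lemma Sys.exists_minC (h : Sys G k A S b s q r) (hq : 1 ≤ q) (v0 : V) : ∃ v C, MinC G S v C := by
  have hne : ∃ n, ∃ v, ∃ C ∈ comps G (S v), 2 ≤ #C ∧ #C = n := by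
    obtain ⟨C, hC⟩ : (good G k (S v0)).Nonempty := card_pos.1 (by rw [h.cq]; omega)
    rw [good, mem_filter] at hC
    exact ⟨_, v0, C, hC.1, hC.2.1, rfl⟩
  classical
  obtain ⟨v, C, hC, h2, hn⟩ := Nat.find_spec hne
  refine ⟨v, C, hC, h2, fun w D hD hD2 => ?_⟩
  rw [hn]
  exact Nat.find_min' hne ⟨w, D, hD, hD2, rfl⟩

lemma Sys.not_trv (h : Sys G k A S b s q r) {v u : V} {C : Finset V} (hC : C ∈ comps G (S v))
    (h2 : 2 ≤ #C) (hu : u ∈ C) : u ∉ A v := by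
  intro hc
  rw [h.trv, trv_iff] at hc
  have := comp_eq hC hc hu (mem_singleton_self u)
  rw [this, card_singleton] at h2
  omega

lemma Sys.C9 (h : Sys G k A S b s q r) (H : Hyp G k) (hq : 2 ≤ q) (hbs : b = 1 ∨ s + 2 ≤ 2 * k)
    {v : V} {C : Finset V} (hC : MinC G S v C) {u : V} (hu : u ∈ C) : ¬ A u ⊆ C := by
  intro hsub
  have huv := h.not_trv hC.mem hC.two hu
  have hj := h.sep v u huv
  have hT : S u ⊆ C ∪ S v := by
    intro w hw
    obtain ⟨y, hy, hyw⟩ := (h.nb u w).1 hw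
    exact mem_union.2 (comp_nb hC.mem (hsub hy) hyw)
  -- the block of `v` avoids `S u`
  have hBT : ∀ w ∈ A v, w ∉ S u := by
    intro w hw hwT
    rcases mem_union.1 (hT hwT) with hc | hc
    · exact h.not_trv hC.mem hC.two hc hw
    · exact h.notS hw hc
  have hone : #(mtg G (S u) (S v)) ≤ 1 := by
    by_cases hj2 : #(S v ∩ S u) = 2
    · rw [← h.sepm v u huv hj2]
      rw [card_le_one]
      have : ∀ D ∈ mtg G (S v) (S u), D = C := by
        intro D hD
        rw [mtg, mem_filter, Finset.not_disjoint_iff] at hD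
        obtain ⟨hD, w, hwD, hwT⟩ := hD
        rcases mem_union.1 (hT hwT) with hc | hc
        · exact comp_eq hD hC.mem hwD hc
        · exact absurd hc (comp_not hD hwD)
      intro D hD D' hD'
      rw [this D hD, this D' hD']
    · obtain ⟨K, hK, hvK⟩ := comp_cover (G := G) (hBT v (h.mem v))
      have hAK : A v ⊆ K := by
        intro w hw
        by_cases hwv : w = v
        · rw [hwv]; exact hvK
        have hb : b ≠ 1 := by
          intro hb
          have h1 := h.cA v
          rw [hb] at h1
          exact hwv (card_le_one.1 h1.le w hw v (h.mem v))
        have h1 := h.common H hw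
        obtain ⟨y, hy, hyT⟩ : ∃ y ∈ nbv G w ∩ nbv G v, y ∉ S v ∩ S u := by
          by_contra hcon
          push Not at hcon
          have := card_le_card (show nbv G w ∩ nbv G v ⊆ S v ∩ S u from hcon)
          omega
        rw [mem_inter, mem_nbv, mem_nbv] at hy
        have hyS := h.nS hy.2
        have hyT' : y ∉ S u := fun hc => hyT (mem_inter.2 ⟨hyS, hc⟩)
        have hyK := (comp_nb hK hvK hy.2).resolve_right hyT'
        exact (comp_nb hK hyK hy.1.symm).resolve_right (hBT w hw)
      rw [card_le_one]
      have : ∀ D ∈ mtg G (S u) (S v), D = K := by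
        intro D hD
        rw [mtg, mem_filter, Finset.not_disjoint_iff] at hD
        obtain ⟨hD, w, hwD, hwT⟩ := hD
        obtain ⟨y, hy, hyw⟩ := (h.nb v w).1 hwT
        exact comp_eq hD hK hwD ((comp_nb hK (hAK hy) hyw).resolve_right (comp_not hD hwD))
      intro D hD D' hD'
      rw [this D hD, this D' hD']
  obtain ⟨K1, hK1, hK1S⟩ : ∃ K ∈ good G k (S u), Disjoint K (S v) := by
    by_contra hcon
    push Not at hcon
    have : good G k (S u) ⊆ mtg G (S u) (S v) := by
      intro K hK
      rw [mtg, mem_filter]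
      exact ⟨(mem_filter.1 hK).1, hcon K hK⟩
    have := card_le_card this
    rw [h.cq] at this
    omega
  rw [good, mem_filter] at hK1
  obtain ⟨hK1, hK2, -⟩ := hK1
  obtain ⟨x, hx⟩ := comp_ne hK1
  have huK : u ∉ K1 := fun hc => h.not_trv hK1 hK2 hc (h.mem u)
  obtain ⟨D, hD, hxD⟩ := comp_cover (G := G) (Finset.disjoint_left.1 hK1S hx)
  have hKD := comp_in hD hK1 hK1S hxD hx
  by_cases hDC : D = C
  · rw [hDC] at hKD
    have := eq_of_subset_of_card_le hKD (hC.min u K1 hK1 hK2)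
    exact huK (this ▸ hu)
  · have := (kappa H.conn H.tr H.reg H.hk (X := K1) (S := S v ∩ S u) ⟨x, hx⟩ (by
      intro y hy z hyz
      rcases comp_nb hK1 hy hyz with hc | hc
      · exact Or.inl hc
      · right
        rw [mem_inter]
        refine ⟨?_, hc⟩
        rcases comp_nb hD (hKD hy) hyz with hzD | hzD
        · rcases mem_union.1 (hT hc) with h1 | h1
          · exact absurd (comp_eq hD hC.mem hzD h1) hDC
          · exact h1
        · exact hzD) ⟨u, huK, fun hc => comp_not hC.mem hu (mem_inter.1 hc).1⟩).1
    omega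

lemma Sys.nbC (h : Sys G k A S b s q r) (H : Hyp G k) {v u : V} {C : Finset V}
    (hC : C ∈ comps G (S v)) (h2 : 2 ≤ #C) (hu : u ∈ C) : k ≤ #(nbv G u ∩ C) + 2 := by
  have h1 := h.star (h.not_trv hC h2 hu)
  have hsub : nbv G u ⊆ (nbv G u ∩ C) ∪ (nbv G u ∩ S v) := by
    intro w hw
    rw [← inter_union_distrib_left, mem_inter, mem_union]
    exact ⟨hw, comp_nb hC hu (mem_nbv.1 hw)⟩
  have h3 := (card_le_card hsub).trans (card_union_le _ _)
  rw [card_nbv H.reg] at h3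
  omega

lemma Sys.oddC (h : Sys G k A S b s q r) (H : Hyp G k) {v : V} {C : Finset V}
    (hC : C ∈ comps G (S v)) : Odd #C :=
  (L6 H.conn H.tr H.reg H.hk H.nb (h.mx v).1.1 (h.mx v).1.2).1 C hC

lemma Sys.nbC' (h : Sys G k A S b s q r) (H : Hyp G k) {u : V} {C : Finset V} (hu : u ∈ C) :
    #(nbv G u ∩ C) + 1 ≤ #C := by
  have : nbv G u ∩ C ⊆ C.erase u := by
    intro w hw
    rw [mem_inter, mem_nbv] at hw
    exact mem_erase.2 ⟨hw.1.ne', hw.2⟩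
  have := card_le_card this
  rw [card_erase_of_mem hu] at this
  have := card_pos.2 ⟨u, hu⟩
  omega

lemma Sys.fiveC (h : Sys G k A S b s q r) (H : Hyp G k) {v : V} {C : Finset V}
    (hC : C ∈ comps G (S v)) (h2 : 2 ≤ #C) : 5 ≤ #C := by
  obtain ⟨u, hu⟩ := comp_ne hC
  have h1 := h.nbC H hC h2 hu
  have h3 := h.nbC' H hu
  have := H.hk
  obtain ⟨m, hm⟩ := h.oddC H hC
  omega

lemma Sys.case1 (h : Sys G k A S 1 s q r) (H : Hyp G k) (hq : 2 ≤ q) (v0 : V) : False := by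
  obtain ⟨v, C, hC⟩ := h.exists_minC (by omega) v0
  obtain ⟨u, hu⟩ := comp_ne hC.mem
  refine h.C9 H hq (Or.inl rfl) hC hu ?_
  intro w hw
  rwa [card_le_one.1 (h.cA u).le w hw u (h.mem u)]

lemma Sys.case2 (h : Sys G k A S 2 6 q r) (H : Hyp G k) (hq : 2 ≤ q) (v0 : V) : False := by
  have hk := H.hk
  obtain ⟨v, C, hC⟩ := h.exists_minC (by omega) v0
  have hpart : ∀ u, ∃ p, p ∈ A u ∧ (u ∈ C → p ∈ S v) := by
    intro u
    by_cases hu : u ∈ C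
    · obtain ⟨p, hp, hpC⟩ := not_subset.1 (h.C9 H hq (Or.inr (by omega)) hC hu)
      refine ⟨p, hp, fun _ => ?_⟩
      by_contra hpS
      obtain ⟨D, hD, hpD⟩ := comp_cover (G := G) hpS
      have h1 := h.common H hp
      have h2 := h.star (h.not_trv hC.mem hC.two hu)
      have : nbv G p ∩ nbv G u ⊆ nbv G u ∩ S v := by
        intro w hw
        rw [mem_inter, mem_nbv, mem_nbv] at hw
        rw [mem_inter, mem_nbv]
        refine ⟨hw.2, ?_⟩
        rcases comp_nb hC.mem hu hw.2 with h3 | h3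
        · rcases comp_nb hD hpD hw.1 with h4 | h4
          · have := comp_eq hD hC.mem h4 h3
            exact absurd (this ▸ hpD) hpC
          · exact h4
        · exact h3
      have := card_le_card this
      omega
    · exact ⟨u, h.mem u, fun hc => absurd hc hu⟩
  choose p hpA hpS using hpart
  have hinj : Set.InjOn p (C : Set V) := by
    intro x hx y hy hxy
    by_contra hne
    have h1 := h.eqA _ _ (hpA x)
    have h2 := h.eqA _ _ (hpA y)
    have hsub : ({x, y, p x} : Finset V) ⊆ A x := by
      intro z hz
      simp only [mem_insert, mem_singleton] at hz
      rcases hz with rfl | rfl | rfl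
      · exact h.mem z
      · rw [← h1, hxy, h2]; exact h.mem z
      · exact hpA x
    have h3 := card_le_card hsub
    have hxp : x ≠ p x := fun hc => comp_not hC.mem hx (hc ▸ hpS x hx)
    have hyp : y ≠ p x := fun hc => comp_not hC.mem hy (by
      have := hpS x hx; rw [← hc] at this; exact this)
    rw [h.cA, card_eq_three.2 ⟨x, y, p x, hne, hxp, hyp, rfl⟩] at h3
    omega
  have himg : C.image p ⊆ S v := by
    intro z hz
    obtain ⟨x, hx, rfl⟩ := mem_image.1 hz
    exact hpS x hx
  have hcard : #C ≤ 6 := by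
    rw [← h.cS v, ← card_image_of_injOn hinj]
    exact card_le_card himg
  have h5 := h.fiveC H hC.mem hC.two
  obtain ⟨m, hm⟩ := h.oddC H hC.mem
  have hC5 : #C = 5 := by omega
  have hup : dd G C ≤ 10 := by
    rw [comp_dd hC.mem, E_eq]
    calc ∑ x ∈ C, #(nbv G x ∩ S v) ≤ ∑ x ∈ C, 2 :=
          sum_le_sum fun x hx => h.star (h.not_trv hC.mem hC.two hx)
      _ = 10 := by rw [sum_const, hC5]; rfl
  have hlow : 5 * (2 * k - 8) ≤ dd G C := by
    rw [comp_dd hC.mem, E_comm]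
    refine le_trans ?_ (E_mono himg (subset_refl C))
    rw [E_eq, sum_image hinj]
    calc 5 * (2 * k - 8) = ∑ x ∈ C, (2 * k - 8) := by rw [sum_const, hC5]; rfl
      _ ≤ _ := sum_le_sum fun x hx => ?_
    have h1 := h.common H (hpA x)
    have h2 := h.star (h.not_trv hC.mem hC.two hx)
    have hsub : nbv G (p x) ∩ nbv G x ⊆ (nbv G (p x) ∩ C) ∪ (nbv G x ∩ S v) := by
      intro w hw
      rw [mem_inter, mem_nbv, mem_nbv] at hw
      rw [mem_union, mem_inter, mem_inter, mem_nbv, mem_nbv]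
      rcases comp_nb hC.mem hx hw.2 with h3 | h3
      · exact Or.inl ⟨hw.1, h3⟩
      · exact Or.inr ⟨hw.2, h3⟩
    have h3 := (card_le_card hsub).trans (card_union_le _ _)
    omega
  have hpar := dd_parity H.reg (h.oddC H hC.mem)
  have : k = 5 := by omega
  subst this
  omega

end FC

namespace FC
open SimpleGraph Finset
variable {V : Type*} [Fintype V] [DecidableEq V] {G : SimpleGraph V} [DecidableRel G.Adj] {k : ℕ}
variable {A S : V → Finset V} {b s q r : ℕ}

lemma Sys.full_tr (h : Sys G k A S b s q r) (H : Hyp G k) {w z : V} (hz : A z ⊆ nbv G w) (y : V) :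
    ∃ x, A x ⊆ nbv G y := by
  obtain ⟨φ, hφ, hy⟩ := H.tr w y
  refine ⟨φ z, ?_⟩
  rw [h.eqv φ hφ, ← hy, nbv_mp hφ]
  exact map_subset_map.2 hz

lemma Sys.type (h : Sys G k A S b s q r) (H : Hyp G k) (hk : k = b + 1) {w z y : V}
    (hz : A z ⊆ nbv G w) (hy : G.Adj w y) : A y = A z ∨ #(nbv G w ∩ A y) = 1 := by
  by_cases hyz : y ∈ A z
  · exact Or.inl (h.eqA _ _ hyz)
  · right
    have hd := h.disj hyz
    have hsub : (nbv G w ∩ A y) ∪ A z ⊆ nbv G w := union_subset inter_subset_left hz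
    have h1 := card_le_card hsub
    rw [card_union_of_disjoint (hd.symm.mono_left inter_subset_right), card_nbv H.reg, h.cA] at h1
    have : 0 < #(nbv G w ∩ A y) := card_pos.2 ⟨y, mem_inter.2 ⟨mem_nbv.2 hy, h.mem y⟩⟩
    omega

lemma Sys.meets (h : Sys G k A S b (2 * b) q r) (H : Hyp G k) (hq : 2 ≤ q) (hb : 4 ≤ b)
    (hk : b + 1 ≤ k) {v : V} {C : Finset V} (hC : MinC G S v C) {u : V} (hu : u ∈ C) :
    ∃ x ∈ A u, x ∈ S v := by
  by_contra hcon
  push Not at hcon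
  obtain ⟨p, hp, hpC⟩ := not_subset.1 (h.C9 H hq (Or.inr (by omega)) hC hu)
  have hJ := h.sep v u (h.not_trv hC.mem hC.two hu)
  -- common neighbours of vertices of the block inside and outside `C`
  have hcom : ∀ x ∈ A u, x ∈ C → ∀ y ∈ A u, y ∉ C → nbv G x ∩ nbv G y ⊆ S v ∩ S u := by
    intro x hx hxC y hy hyC w hw
    rw [mem_inter, mem_nbv, mem_nbv] at hw
    rw [mem_inter]
    refine ⟨?_, (h.nb u w).2 ⟨x, hx, hw.1⟩⟩
    obtain ⟨D, hD, hyD⟩ := comp_cover (G := G) (hcon y hy)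
    rcases comp_nb hC.mem hxC hw.1 with h3 | h3
    · rcases comp_nb hD hyD hw.2 with h4 | h4
      · have := comp_eq hD hC.mem h4 h3
        exact absurd (this ▸ hyD) hyC
      · exact h4
    · exact h3
  have hbig : ∀ x ∈ A u, ∀ y ∈ A u, 2 * k ≤ #(nbv G x ∩ nbv G y) + 2 * b := by
    intro x hx y hy
    apply h.common H
    rw [h.eqA u y hy]; exact hx
  have hcomeq : ∀ x ∈ A u, x ∈ C → ∀ y ∈ A u, y ∉ C → nbv G x ∩ nbv G y = S v ∩ S u := by
    intro x hx hxC y hy hyC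
    apply eq_of_subset_of_card_le (hcom x hx hxC y hy hyC)
    have := hbig x hx y hy
    omega
  have hkb : k = b + 1 := by
    have h1 := hbig u (h.mem u) p hp
    rw [hcomeq u (h.mem u) hu p hp hpC] at h1
    omega
  have hJ2 : #(S v ∩ S u) = 2 := by
    have h1 := hbig u (h.mem u) p hp
    rw [hcomeq u (h.mem u) hu p hp hpC] at h1
    omega
  have huni : ∀ x ∈ A u, x ∈ C → ∀ y ∈ A u, y ∉ C → nbv G x ∪ nbv G y = S u := by
    intro x hx hxC y hy hyC
    apply eq_of_subset_of_card_le
    · apply union_subset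
      · rw [← h.eqS u x (h.eqA _ _ hx)]; exact h.nS' x
      · rw [← h.eqS u y (h.eqA _ _ hy)]; exact h.nS' y
    · have h1 := card_union_add_card_inter (nbv G x) (nbv G y)
      rw [card_nbv H.reg, card_nbv H.reg, hcomeq x hx hxC y hy hyC] at h1
      rw [h.cS]
      omega
  obtain ⟨j, hj⟩ : (S v ∩ S u).Nonempty := card_pos.1 (by omega)
  have hjfull : A u ⊆ nbv G j := by
    intro x hx
    rw [mem_nbv]
    by_cases hxC : x ∈ C
    · rw [← hcomeq x hx hxC p hp hpC, mem_inter, mem_nbv] at hj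
      exact hj.1.symm
    · rw [← hcomeq u (h.mem u) hu x hx hxC, mem_inter, mem_nbv, mem_nbv] at hj
      exact hj.2.symm
  have hfull := h.full_tr H hjfull
  have hlt : ∀ x, ∃ y, G.Adj x y ∧ y ∉ S v ∩ S u := by
    intro x
    by_contra hc
    push Not at hc
    have : nbv G x ⊆ S v ∩ S u := fun y hy => hc y (mem_nbv.1 hy)
    have := card_le_card this
    rw [card_nbv H.reg] at this
    omega
  -- part inside
  have h1 : #(A u ∩ C) ≤ 1 := by
    obtain ⟨y, hy, hyJ⟩ := hlt u
    have hyp : ¬ G.Adj p y := fun hc => hyJ (by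
      rw [← hcomeq u (h.mem u) hu p hp hpC, mem_inter, mem_nbv, mem_nbv]; exact ⟨hy, hc⟩)
    have hall : ∀ x ∈ A u, x ∈ C → G.Adj x y := by
      intro x hx hxC
      have : y ∈ nbv G x ∪ nbv G p := by
        rw [huni x hx hxC p hp hpC, ← huni u (h.mem u) hu p hp hpC, mem_union, mem_nbv]
        exact Or.inl hy
      rw [mem_union, mem_nbv, mem_nbv] at this
      exact this.resolve_right hyp
    obtain ⟨z, hz⟩ := hfull y
    rcases h.type H hkb hz hy.symm with h2 | h2
    · rw [← h2] at hz
      exact absurd (mem_nbv.1 (hz hp)).symm hyp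
    · rw [← h2]
      apply card_le_card
      intro x hx
      rw [mem_inter] at hx ⊢
      exact ⟨mem_nbv.2 (hall x hx.1 hx.2).symm, hx.1⟩
  have h2 : #(A u \ C) ≤ 1 := by
    obtain ⟨y, hy, hyJ⟩ := hlt p
    have hyp : ¬ G.Adj u y := fun hc => hyJ (by
      rw [← hcomeq u (h.mem u) hu p hp hpC, mem_inter, mem_nbv, mem_nbv]; exact ⟨hc, hy⟩)
    have hall : ∀ x ∈ A u, x ∉ C → G.Adj x y := by
      intro x hx hxC
      have : y ∈ nbv G u ∪ nbv G x := by
        rw [huni u (h.mem u) hu x hx hxC, ← huni u (h.mem u) hu p hp hpC, mem_union, mem_nbv,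
          mem_nbv]
        exact Or.inr hy
      rw [mem_union, mem_nbv, mem_nbv] at this
      exact this.resolve_left hyp
    obtain ⟨z, hz⟩ := hfull y
    have hpu := h.eqA _ _ hp
    rcases h.type H hkb hz hy.symm with h2 | h2
    · rw [← h2, hpu] at hz
      exact absurd (mem_nbv.1 (hz (h.mem u))).symm hyp
    · rw [← h2]
      apply card_le_card
      intro x hx
      rw [mem_sdiff] at hx
      rw [mem_inter, hpu]
      exact ⟨mem_nbv.2 (hall x hx.1 hx.2).symm, hx.1⟩
  have h3 := card_inter_add_card_sdiff (A u) C
  rw [h.cA] at h3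
  omega

lemma two_sum {ι : Type*} [DecidableEq ι] (P : Finset ι) (f : ι → ℕ) (m : ℕ) (hm : ∀ i ∈ P, m ≤ f i)
    {x y : ι} (hx : x ∈ P) (hy : y ∈ P) (hxy : x ≠ y) :
    f x + f y + m * (#P - 2) ≤ ∑ i ∈ P, f i := by
  have h1 : y ∈ P.erase x := mem_erase.2 ⟨hxy.symm, hy⟩
  rw [← add_sum_erase P f hx, ← add_sum_erase _ f h1]
  have h2 : ∑ i ∈ (P.erase x).erase y, m ≤ ∑ i ∈ (P.erase x).erase y, f i :=
    sum_le_sum fun i hi => hm i (mem_of_mem_erase (mem_of_mem_erase hi))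
  rw [sum_const, smul_eq_mul, card_erase_of_mem h1, card_erase_of_mem hx, Nat.sub_sub] at h2
  change (#P - 2) * m ≤ _ at h2
  rw [mul_comm]
  omega

lemma Sys.sum_sigma (h : Sys G k A S b s q r) (X : Finset V) :
    ∑ P ∈ X.image A, #(P ∩ X) = #X := by
  rw [card_eq_sum_card_image A X]
  apply sum_congr rfl
  intro P hP
  obtain ⟨x, hx, rfl⟩ := mem_image.1 hP
  congr 1
  ext y
  rw [mem_inter, mem_filter]
  constructor
  · rintro ⟨h1, h2⟩; exact ⟨h2, h.eqA _ _ h1⟩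
  · rintro ⟨h1, h2⟩; exact ⟨h2 ▸ h.mem y, h1⟩

lemma Sys.manyBlocks (h : Sys G k A S b (2 * b) q r) (H : Hyp G k) (hq : 2 ≤ q) (hb : 4 ≤ b)
    (hb5 : b ≤ 5) (hk : b + 1 ≤ k) {v : V} {C : Finset V} (hC : MinC G S v C) :
    4 ≤ #((S v).image A) := by
  have hsub : C ⊆ ((S v).image A).biUnion (fun P => P \ S v) := by
    intro u hu
    obtain ⟨x, hx, hxS⟩ := h.meets H hq hb hk hC hu
    rw [mem_biUnion]
    refine ⟨A x, mem_image_of_mem A hxS, ?_⟩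
    rw [mem_sdiff]
    exact ⟨h.symA hx, comp_not hC.mem hu⟩
  have h1 := (card_le_card hsub).trans card_biUnion_le
  have h2 : ∑ P ∈ (S v).image A, #(P \ S v) + ∑ P ∈ (S v).image A, #(P ∩ S v) =
      b * #((S v).image A) := by
    rw [← sum_add_distrib, mul_comm, ← smul_eq_mul, ← sum_const]
    apply sum_congr rfl
    intro P hP
    obtain ⟨x, hx, rfl⟩ := mem_image.1 hP
    rw [add_comm, card_inter_add_card_sdiff, h.cA]
  rw [h.sum_sigma, h.cS] at h2
  have h5 := h.fiveC H hC.mem hC.two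
  obtain ⟨m, hm⟩ := h.oddC H hC.mem
  have h6 : b = 5 → 6 ≤ #C := by
    intro hb
    by_contra hlt
    have hC5 : #C = 5 := by omega
    obtain ⟨u, hu⟩ := comp_ne hC.mem
    have hcu : ∀ u ∈ C, nbv G u ∩ C = C.erase u := by
      intro u hu
      apply eq_of_subset_of_card_le
      · intro w hw
        rw [mem_inter, mem_nbv] at hw
        exact mem_erase.2 ⟨hw.1.ne', hw.2⟩
      · rw [card_erase_of_mem hu]
        have := h.nbC H hC.mem hC.two hu
        omega
    obtain ⟨w, hw⟩ : (nbv G u ∩ C).Nonempty := by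
      rw [hcu u hu, ← card_pos, card_erase_of_mem hu]; omega
    rw [mem_inter, mem_nbv] at hw
    have hs := h.sep u w (fun hc => h.indep (h.mem u) hc hw.1)
    have : (C.erase u).erase w ⊆ S u ∩ S w := by
      intro z hz
      have hz1 := mem_erase.1 hz
      have hz2 := mem_erase.1 hz1.2
      have ha : z ∈ nbv G u ∩ C := by rw [hcu u hu]; exact hz1.2
      have hb' : z ∈ nbv G w ∩ C := by rw [hcu w hw.2]; exact mem_erase.2 ⟨hz1.1, hz2.2⟩
      exact mem_inter.2 ⟨h.nS' u (mem_inter.1 ha).1, h.nS' w (mem_inter.1 hb').1⟩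
    have := card_le_card this
    rw [card_erase_of_mem (mem_erase.2 ⟨hw.1.ne', hw.2⟩), card_erase_of_mem hu] at this
    omega
  have : b = 4 ∨ b = 5 := by omega
  rcases this with rfl | rfl
  · omega
  · have := h6 rfl
    omega

lemma Sys.two_blocks (h : Sys G k A S b s q 2) {w x : V} (hx : G.Adj w x) :
    ∃ y, G.Adj w y ∧ A x ≠ A y ∧ nbv G w ⊆ A x ∪ A y := by
  have hmem : A x ∈ (nbv G w).image A := mem_image_of_mem A (mem_nbv.2 hx)
  have hc := h.cnt w
  obtain ⟨P, hP, hPx⟩ := exists_mem_ne (by omega : 1 < #((nbv G w).image A)) (A x)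
  obtain ⟨y, hy, rfl⟩ := mem_image.1 hP
  refine ⟨y, mem_nbv.1 hy, hPx.symm, fun z hz => ?_⟩
  have h1 : ({A x, A y} : Finset (Finset V)) = (nbv G w).image A := by
    apply eq_of_subset_of_card_le
    · intro Q hQ
      rw [mem_insert, mem_singleton] at hQ
      rcases hQ with rfl | rfl
      · exact hmem
      · exact hP
    · rw [hc, card_pair hPx.symm]
  have h2 : A z ∈ ({A x, A y} : Finset (Finset V)) := by rw [h1]; exact mem_image_of_mem A hz
  rw [mem_insert, mem_singleton] at h2
  rw [mem_union]
  rcases h2 with h2 | h2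
  · left; rw [← h2]; exact h.mem z
  · right; rw [← h2]; exact h.mem z

lemma Sys.exists_full (h : Sys G k A S b (2 * b) q 2) (H : Hyp G k) (hb : 4 ≤ b)
    (hb5 : b ≤ 5) (hk : b + 1 ≤ k) (hk5 : b = 5 → k = 6) {v : V}
    (hN : 4 ≤ #((S v).image A)) : k = b + 1 ∧ ∃ w z, A z ⊆ nbv G w := by
  set f : Finset V → ℕ := fun P => #(P ∩ S v) with hf
  have hsum : ∑ P ∈ (S v).image A, f P = 2 * b := by rw [hf, h.sum_sigma, h.cS]
  -- what a vertex of the block sees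
  have hsee : ∀ w ∈ A v, ∀ x, G.Adj w x → ∃ y, G.Adj w y ∧ A x ≠ A y ∧ y ∈ S v ∧ x ∈ S v ∧
      nbv G w ⊆ (A x ∩ S v) ∪ (A y ∩ S v) ∧ k ≤ f (A x) + f (A y) := by
    intro w hw x hx
    obtain ⟨y, hy, hxy, hsub⟩ := h.two_blocks hx
    have hws : nbv G w ⊆ S v := by
      rw [← h.eqS v w (h.eqA _ _ hw)]; exact h.nS' w
    have hsub' : nbv G w ⊆ (A x ∩ S v) ∪ (A y ∩ S v) := by
      rw [← union_inter_distrib_right]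
      exact subset_inter hsub hws
    refine ⟨y, hy, hxy, hws (mem_nbv.2 hy), hws (mem_nbv.2 hx), hsub', ?_⟩
    have := (card_le_card hsub').trans (card_union_le _ _)
    rwa [card_nbv H.reg] at this
  have heq : ∀ w ∈ A v, ∀ x y, nbv G w ⊆ (A x ∩ S v) ∪ (A y ∩ S v) → f (A x) + f (A y) ≤ k →
      nbv G w = (A x ∩ S v) ∪ (A y ∩ S v) := by
    intro w hw x y hsub hle
    apply eq_of_subset_of_card_le hsub
    rw [card_nbv H.reg]
    exact (card_union_le _ _).trans hle
  have hfb : ∀ x, f (A x) ≤ b := fun x => (card_le_card inter_subset_left).trans (h.cA x).le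
  obtain ⟨P, hP, hmin⟩ := exists_min_image ((S v).image A) f (card_pos.1 (by omega))
  obtain ⟨x, hx, rfl⟩ := mem_image.1 hP
  have hpos : 1 ≤ f (A x) := card_pos.2 ⟨x, mem_inter.2 ⟨h.mem x, hx⟩⟩
  obtain ⟨w, hw, hwx⟩ := (h.nb v x).1 hx
  obtain ⟨y, hwy, hxy, hyS, -, hsub, hkle⟩ := hsee w hw x hwx
  have hyP : A y ∈ (S v).image A := mem_image_of_mem A hyS
  have h1 := two_sum _ f (f (A x)) hmin hP hyP hxy
  rw [hsum] at h1
  have hby := hfb y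
  have h2 : f (A x) * 2 ≤ f (A x) * (#((S v).image A) - 2) := Nat.mul_le_mul_left _ (by omega)
  have hx2 : f (A x) ≤ 2 := by omega
  rcases (by omega : f (A x) = 1 ∨ f (A x) = 2) with hf1 | hf2
  · have hkb : k = b + 1 := by omega
    refine ⟨hkb, w, y, ?_⟩
    rw [heq w hw x y hsub (by omega)]
    have : A y ∩ S v = A y := by
      apply eq_of_subset_of_card_le inter_subset_left
      rw [h.cA]
      change b ≤ f (A y)
      omega
    rw [this]
    exact subset_union_right
  · have hb5' : b = 5 := by omega
    have hk6 := hk5 hb5'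
    refine ⟨by omega, y, v, ?_⟩
    have hother : ∀ Q ∈ (S v).image A, A y ≠ Q → f Q ≤ 2 := by
      intro Q hQ hne
      have := two_sum _ f (f (A x)) hmin hyP hQ hne
      rw [hsum] at this
      omega
    intro w' hw'
    rw [mem_nbv]
    obtain ⟨x', hx'⟩ : (nbv G w').Nonempty := card_pos.1 (by rw [card_nbv H.reg]; omega)
    obtain ⟨y', hwy', hxy', hyS', hxS', hsub', hkle'⟩ := hsee w' hw' x' (mem_nbv.1 hx')
    have hxm := mem_image_of_mem A hxS'
    have hym := mem_image_of_mem A hyS'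
    have hyy : y ∈ A y ∩ S v := mem_inter.2 ⟨h.mem y, hyS⟩
    have hy4 : f (A y) ≤ 4 := by omega
    by_cases e1 : A y = A x'
    · have h3 := hother _ hym (e1 ▸ hxy')
      have : y ∈ nbv G w' := by
        rw [heq w' hw' x' y' hsub' (by rw [← e1]; omega), ← e1]
        exact mem_union_left _ hyy
      exact (mem_nbv.1 this).symm
    · have h3 := hother _ hxm e1
      by_cases e2 : A y = A y'
      · have : y ∈ nbv G w' := by
          rw [heq w' hw' x' y' hsub' (by rw [← e2]; omega), ← e2]
          exact mem_union_right _ hyy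
        exact (mem_nbv.1 this).symm
      · have h4 := hother _ hym e2
        omega

end FC

namespace FC
open SimpleGraph Finset
variable {V : Type*} [Fintype V] [DecidableEq V] {G : SimpleGraph V} [DecidableRel G.Adj] {k : ℕ}
variable {A S : V → Finset V} {b s q r : ℕ}

lemma Sys.caseBig (h : Sys G k A S b (2 * b) q 2) (H : Hyp G k) (hq : 2 ≤ q) (hb : 4 ≤ b)
    (hb5 : b ≤ 5) (hk : b + 1 ≤ k) (hk5 : b = 5 → k = 6) (v0 : V) : False := by
  obtain ⟨v, C0, hC0⟩ := h.exists_minC (by omega) v0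
  have hN := h.manyBlocks H hq hb hb5 hk hC0
  obtain ⟨hkb, w0, z0, hz0⟩ := h.exists_full H hb hb5 hk hk5 hN
  choose z hz using h.full_tr H hz0
  have huniq : ∀ x w, A x ⊆ nbv G w → A x = A (z w) := by
    intro x w hx
    by_contra hne
    have hd := h.disj (x := z w) (y := x) (fun hc => hne (h.eqA _ _ hc))
    have h1 := card_le_card (union_subset (hz w) hx)
    rw [card_union_of_disjoint hd, h.cA, h.cA, card_nbv H.reg] at h1
    omega
  have hcv : ∀ w ∈ A v, A (z w) = A (z v) := by
    intro w hw
    by_contra hne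
    have hd := h.disj (x := z v) (y := z w) (fun hc => hne (h.eqA _ _ hc))
    have hsub : A (z v) ∪ A (z w) ⊆ S v := by
      apply union_subset ((hz v).trans (h.nS' v))
      rw [← h.eqS v w (h.eqA _ _ hw)]
      exact (hz w).trans (h.nS' w)
    have heq := eq_of_subset_of_card_le hsub (by
      rw [card_union_of_disjoint hd, h.cA, h.cA, h.cS]; omega)
    have : (S v).image A ⊆ {A (z v), A (z w)} := by
      rw [← heq]
      intro P hP
      obtain ⟨x, hx, rfl⟩ := mem_image.1 hP
      rw [mem_insert, mem_singleton]
      rcases mem_union.1 hx with hx | hx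
      · left; exact h.eqA _ _ hx
      · right; exact h.eqA _ _ hx
    have := (card_le_card this).trans card_le_two
    omega
  have hconst : ∀ u, ∀ w ∈ A u, A (z w) = A (z u) := by
    intro u w hw
    obtain ⟨φ, hφ, hu⟩ := H.tr v u
    have htr : ∀ x, A (z (φ x)) = mp φ (A (z x)) := by
      intro x
      rw [← h.eqv φ hφ]
      symm
      apply huniq
      rw [h.eqv φ hφ, nbv_mp hφ]
      exact map_subset_map.2 (hz x)
    obtain ⟨w1, rfl⟩ := φ.surjective w
    rw [← hu, h.eqv φ hφ, apply_mem_mp] at hw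
    rw [← hu, htr, htr, hcv w1 hw]
  have hback : ∀ u, ∀ y ∈ A (z u), A (z y) = A u := by
    intro u y hy
    symm
    apply huniq
    intro w hw
    rw [mem_nbv]
    rw [← hconst u w hw] at hy
    exact (mem_nbv.1 (hz w hy)).symm
  set D : V → Finset V := fun u => A u ∪ A (z u) with hD
  have hDD : ∀ u, ∀ y ∈ D u, D y = D u := by
    intro u y hy
    simp only [hD] at hy ⊢
    rcases mem_union.1 hy with hy | hy
    · rw [h.eqA _ _ hy, hconst u y hy]
    · rw [h.eqA _ _ hy, hback u y hy, union_comm]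
  have hDm : ∀ u, u ∈ D u := fun u => mem_union_left _ (h.mem u)
  have hm : ∀ w x y, G.Adj w x → G.Adj w y → x ∉ A (z w) → y ∉ A (z w) → x = y := by
    intro w x y hx hy hx' hy'
    have h1 := card_sdiff_add_card_eq_card (hz w)
    rw [h.cA, card_nbv H.reg] at h1
    exact card_le_one.1 (by omega : #(nbv G w \ A (z w)) ≤ 1) _
      (mem_sdiff.2 ⟨mem_nbv.2 hx, hx'⟩) _ (mem_sdiff.2 ⟨mem_nbv.2 hy, hy'⟩)
  have hcD : #(D v) = 2 * b := by
    have hd := h.disj (x := v) (y := z v) (fun hc =>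
      h.indep (h.mem v) hc (mem_nbv.1 (hz v (h.mem _))))
    simp only [hD]
    rw [card_union_of_disjoint hd, h.cA, h.cA]; omega
  have hdd : dd G (D v) ≤ 2 * b := by
    have h1 := dd_add H.reg (D v)
    have h2 : 2 * b * b ≤ E G (D v) (D v) := by
      rw [E_eq]
      calc 2 * b * b = ∑ x ∈ D v, b := by rw [sum_const, hcD]; rfl
        _ ≤ _ := sum_le_sum fun x hx => ?_
      rw [← h.cA (z x)]
      apply card_le_card
      apply subset_inter (hz x)
      rw [← hDD v x hx]
      exact subset_union_right
    rw [hcD, hkb] at h1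
    nlinarith
  have hone : ∀ C ∈ comps G (S v), ∀ u, u ∉ D v → ∀ y ∈ D u, y ∈ C → ∀ y' ∈ D u, y' ∉ S v →
      y' ∈ C := by
    intro C hC u hu y hy hyC y' hy' hyS
    have hyv : y ∉ D v := fun hc => hu (by rw [← hDD v y hc, hDD u y hy]; exact hDm u)
    have hyA : y ∉ A v := fun hc => hyv (mem_union_left _ hc)
    rw [← hDD u y hy] at hy'
    rcases mem_union.1 hy' with h1 | h1
    · obtain ⟨t, ht, htS⟩ : ∃ t ∈ A (z y), t ∉ S v := by
        by_contra hcon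
        push Not at hcon
        have h2 := card_le_card (subset_inter (hz y) (show A (z y) ⊆ S v from hcon))
        have h3 := h.star hyA
        rw [h.cA] at h2
        omega
      have htC := (comp_nb hC hyC (mem_nbv.1 (hz y ht))).resolve_right htS
      rw [← hconst y y' h1] at ht
      exact (comp_nb hC htC (mem_nbv.1 (hz y' ht)).symm).resolve_right hyS
    · exact (comp_nb hC hyC (mem_nbv.1 (hz y h1))).resolve_right hyS
  have hZ : ∀ x ∈ S v, x ∉ D v → ∀ t, G.Adj x t → t ∈ D x ∨ t ∈ D v := by
    intro x hx hxD t ht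
    obtain ⟨w, hw, hwx⟩ := (h.nb v x).1 hx
    have hwD : w ∈ D v := mem_union_left _ hw
    by_cases h1 : t ∈ A (z x)
    · exact Or.inl (mem_union_right _ h1)
    · right
      have h2 : w ∉ A (z x) := by
        intro hc
        have h3 := hDD x w (mem_union_right _ hc)
        rw [hDD v w hwD] at h3
        exact hxD (h3 ▸ hDm x)
      rw [hm x t w ht hwx.symm h1 h2]
      exact hwD
  set K : Finset V → Finset V := fun C => univ.filter fun u => u ∉ D v ∧ ∃ y ∈ D u, y ∈ C with hK
  have hmK : ∀ C u, u ∈ K C ↔ u ∉ D v ∧ ∃ y ∈ D u, y ∈ C := by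
    intro C u; simp [hK]
  have hleave : ∀ C ∈ comps G (S v), ∀ x ∈ K C, ∀ y, G.Adj x y → y ∈ K C ∨ y ∈ D v := by
    intro C hC x hx y hxy
    rw [hmK] at hx ⊢
    by_cases hyD : y ∈ D v
    · exact Or.inr hyD
    left
    refine ⟨hyD, ?_⟩
    obtain ⟨hxD, t, ht, htC⟩ := hx
    by_cases hxS : x ∈ S v
    · have h1 := (hZ x hxS hxD y hxy).resolve_right hyD
      rw [hDD x y h1]
      exact ⟨t, ht, htC⟩
    · have hxC := hone C hC x hxD t ht htC x (hDm x) hxS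
      rcases comp_nb hC hxC hxy with h1 | h1
      · exact ⟨y, hDm y, h1⟩
      · have h2 := (hZ y h1 hyD x hxy.symm).resolve_right hxD
        rw [← hDD y x h2]
        exact ⟨t, ht, htC⟩
  have hdK : ∀ C ∈ comps G (S v), 2 ≤ #C → k ≤ E G (K C) (D v) := by
    intro C hC hC2
    have h1 : k ≤ dd G (K C) := by
      refine dd_ge_k H.conn H.tr H.reg H.hk ?_ ?_
      · obtain ⟨u, hu⟩ := comp_ne hC
        refine ⟨u, (hmK C u).2 ⟨fun hc => ?_, u, hDm u, hu⟩⟩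
        rcases mem_union.1 hc with hc | hc
        · exact h.not_trv hC hC2 hu hc
        · exact comp_not hC hu (h.nS' v (hz v hc))
      · intro hc
        have : v ∈ K C := by rw [hc]; exact mem_univ v
        exact ((hmK C v).1 this).1 (hDm v)
    refine h1.trans ?_
    rw [dd, E_eq, E_eq]
    apply sum_le_sum
    intro x hx
    apply card_le_card
    intro y hy
    rw [mem_inter, mem_nbv, mem_compl] at hy
    rw [mem_inter, mem_nbv]
    exact ⟨hy.1, (hleave C hC x hx y hy.1).resolve_left hy.2⟩
  obtain ⟨C1, hC1, C2, hC2, hne⟩ := one_lt_card.1 (by rw [h.cq]; omega : 1 < #(good G k (S v)))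
  rw [good, mem_filter] at hC1 hC2
  have hdisj : Disjoint (K C1) (K C2) := by
    rw [Finset.disjoint_left]
    intro x hx1 hx2
    rw [hmK] at hx1 hx2
    obtain ⟨hxD, y1, hy1, hyC1⟩ := hx1
    obtain ⟨-, y2, hy2, hyC2⟩ := hx2
    exact hne (comp_eq hC1.1 hC2.1
      (hone C1 hC1.1 x hxD y1 hy1 hyC1 y2 hy2 (comp_not hC2.1 hyC2)) hyC2)
  have e1 := hdK C1 hC1.1 hC1.2.1
  have e2 := hdK C2 hC2.1 hC2.2.1
  have e3 : E G (K C1 ∪ K C2) (D v) ≤ dd G (D v) := by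
    rw [dd, E_comm (D v)]
    apply E_mono _ (subset_refl _)
    intro x hx
    rw [mem_compl]
    rcases mem_union.1 hx with hx | hx
    · exact ((hmK _ _).1 hx).1
    · exact ((hmK _ _).1 hx).1
  rw [E_union_left hdisj] at e3
  omega

theorem no_trv (H : Hyp G k) {M : Finset V} (hM : MaxLev G M) {u : V} (hu : u ∈ trv G M) :
    False := by
  obtain ⟨A, S, b, s, q, r, h, hs, hr, hks, hq1, hq3, hq6, hb, hbs⟩ := exists_sys H hM hu
  have hk := H.hk
  have hb5 : b ≤ 5 := by
    have : b ∣ 2 + q := by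
      have h1 : b ∣ s := ⟨r, by rw [hr]; ring⟩
      have h2 : b ∣ b + (2 + q) := by convert h1 using 1; omega
      exact (Nat.dvd_add_right (dvd_refl b)).1 h2
    have := Nat.le_of_dvd (by omega) this
    omega
  by_cases hb1 : b = 1
  · subst hb1
    by_cases hq : 2 ≤ q
    · exact h.case1 H hq u
    · omega
  by_cases hb2 : b = 2
  · subst hb2
    obtain rfl : q = 2 := by omega
    obtain rfl : s = 6 := by omega
    exact h.case2 H (by omega) u
  by_cases hb3 : b = 3
  · subst hb3
    obtain rfl : q = 1 := by omega
    obtain rfl : s = 6 := by omega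
    obtain rfl : r = 2 := by omega
    exact h.case3 H u
  have hb45 : b = 4 ∨ b = 5 := by omega
  have hq' : q + 2 = b := by rcases hb45 with rfl | rfl <;> omega
  obtain rfl : s = 2 * b := by omega
  obtain rfl : r = 2 := by rcases hb45 with rfl | rfl <;> omega
  refine h.caseBig H (by omega) (by omega) hb5 ?_ (fun h5 => hq6 (by omega)) u
  rcases hb45 with rfl | rfl
  · omega
  · have := hq6 (by omega); omega

end FC

namespace FC
open SimpleGraph Finset
variable {V : Type*} [Fintype V] [DecidableEq V] {G : SimpleGraph V} [DecidableRel G.Adj] {k : ℕ}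

lemma odd_le_oc {W : Type*} (K : SimpleGraph W) (f : W → V) (hf : Function.Injective f)
    (hadj : ∀ a b, K.Adj a b ↔ G.Adj (f a) (f b)) (S : Finset V)
    (hS : ∀ v, v ∈ S ↔ v ∉ Set.range f) : K.oddComponents.ncard ≤ oc G S := by
  classical
  let F : K.ConnectedComponent → Finset V := fun c => univ.filter fun v => ∃ a ∈ c.supp, f a = v
  have hmF : ∀ c v, v ∈ F c ↔ ∃ a ∈ c.supp, f a = v := by intro c v; simp [F]
  have hmF' : ∀ c a, f a ∈ F c ↔ a ∈ c.supp := by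
    intro c a
    rw [hmF]
    constructor
    · rintro ⟨a', ha', h⟩; rwa [← hf h]
    · intro h; exact ⟨a, h, rfl⟩
  unfold oc
  rw [← Set.ncard_coe_finset]
  refine Set.ncard_le_ncard_of_injOn F ?_ ?_ (Set.toFinite _)
  · intro c hc
    rw [mem_coe, mem_filter, mem_comps]
    refine ⟨⟨?_, ⟨?_, ?_⟩, ?_⟩, ?_⟩
    · obtain ⟨a, ha⟩ := c.nonempty_supp
      exact ⟨f a, (hmF' c a).2 ha⟩
    · intro x hx
      obtain ⟨a, ha, rfl⟩ := (hmF c x).1 hx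
      rw [hS]; simp
    · intro x hx y hxy hy
      obtain ⟨a, ha, rfl⟩ := (hmF c x).1 hx
      rw [hS, not_not] at hy
      obtain ⟨a', rfl⟩ := hy
      rw [hmF']
      exact c.mem_supp_of_adj_mem_supp ha ((hadj a a').2 hxy)
    · intro Y hY hne hcl
      apply subset_antisymm hY
      obtain ⟨y, hy⟩ := hne
      obtain ⟨a, ha, rfl⟩ := (hmF c y).1 (hY hy)
      have key : ∀ a', K.Reachable a a' → f a' ∈ Y := by
        rintro a' ⟨p⟩
        induction p with
        | nil => exact hy
        | cons hadj' p ih =>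
          refine ih (c.mem_supp_of_adj_mem_supp ha hadj') ?_
          exact hcl.2 _ hy _ ((hadj _ _).1 hadj') (by rw [hS]; simp)
      intro x hx
      obtain ⟨a', ha', rfl⟩ := (hmF c x).1 hx
      apply key
      rw [ConnectedComponent.mem_supp_iff] at ha ha'
      exact ConnectedComponent.exact (ha.trans ha'.symm)
    · have : (F c : Set V) = f '' c.supp := by
        ext v
        rw [mem_coe, hmF]
        rfl
      rw [← Set.ncard_coe_finset, this, Set.ncard_image_of_injective _ hf]
      exact hc
  · intro c _ c' _ hcc
    obtain ⟨a, ha⟩ := c.nonempty_supp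
    have h1 := (hmF' c a).2 ha
    rw [hcc, hmF'] at h1
    rw [ConnectedComponent.mem_supp_iff] at ha h1
    exact ha.symm.trans h1

lemma exists_max (M : Finset V) (hM : Lev G M) : ∃ S, M ⊆ S ∧ MaxLev G S := by
  classical
  obtain ⟨S, hS, hmax⟩ := exists_max_image (univ.filter fun U => M ⊆ U ∧ Lev G U) card
    ⟨M, by simp [hM]⟩
  rw [mem_filter] at hS
  refine ⟨S, hS.2.1, hS.2.2, fun U hU hUl => ?_⟩
  exact (eq_of_subset_of_card_le hU (hmax U (by
    rw [mem_filter]; exact ⟨mem_univ _, hS.2.1.trans hU, hUl⟩))).symm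

theorem forward (H : Hyp G k) (X : Set V) (hX : X.ncard = 4) :
    ∃ M : (G.induce Xᶜ).Subgraph, M.IsPerfectMatching := by
  classical
  rw [tutte]
  intro u hu
  unfold IsTutteViolator at hu
  set S : Finset V := (X ∪ Subtype.val '' u).toFinset with hSdef
  have h1 := odd_le_oc (G := G) ((⊤ : (G.induce Xᶜ).Subgraph).deleteVerts u).coe (fun a : ((⊤ : (G.induce Xᶜ).Subgraph).deleteVerts u).verts => a.1.1)
    (by intro a b hab; exact Subtype.ext (Subtype.ext hab))
    (by
      intro a b
      have ha := a.2
      have hb := b.2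
      simp only [Subgraph.deleteVerts_verts, Subgraph.verts_top, Set.mem_sdiff, Set.mem_univ, true_and] at ha hb
      simp [Subgraph.deleteVerts_adj, ha, hb]) S
    (by
      intro v
      rw [hSdef, Set.mem_toFinset]
      constructor
      · rintro hv ⟨a, rfl⟩
        have ha := a.2
        simp only [Subgraph.deleteVerts_verts, Subgraph.verts_top, Set.mem_sdiff, Set.mem_univ, true_and] at ha
        rcases hv with hv | ⟨w, hw, hwa⟩
        · exact a.1.2 hv
        · exact ha (by rwa [← Subtype.ext hwa])
      · intro hv
        by_contra hcon
        rw [Set.mem_union, not_or] at hcon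
        exact hv ⟨⟨⟨v, hcon.1⟩, by
          simp only [Subgraph.deleteVerts_verts, Subgraph.verts_top, Set.mem_sdiff, Set.mem_univ, true_and]
          exact fun hc => hcon.2 ⟨_, hc, rfl⟩⟩, rfl⟩)
  have hcard : #S = 4 + u.ncard := by
    rw [hSdef, ← Set.ncard_eq_toFinset_card', Set.ncard_union_eq, hX,
      Set.ncard_image_of_injective _ Subtype.val_injective]
    rw [Set.disjoint_left]
    rintro x hx ⟨w, hw, rfl⟩
    exact w.2 hx
  have h2 := L3 H.conn H.tr H.reg H.hk H.nb H.ev (S := S) (by omega)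
  obtain ⟨m, hm⟩ := oc_parity (G := G) H.ev S
  have hl : Lev G S := ⟨by omega, by omega⟩
  obtain ⟨M, hSM, hM⟩ := exists_max S hl
  have := card_le_card hSM
  obtain ⟨x, hx⟩ := caseI H (by omega) hM.1.2
  exact no_trv H hM hx

theorem backward (hreg : G.IsRegularOfDegree k) (hcard : 6 ≤ Fintype.card V)
    (hpm : ∀ X : Set V, X.ncard = 4 → ∃ M : (G.induce Xᶜ).Subgraph, M.IsPerfectMatching) :
    5 ≤ k := by
  by_contra hk
  have : Nonempty V := Fintype.card_pos_iff.1 (by omega)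
  obtain ⟨v⟩ := this
  obtain ⟨X, hX1, hX2, hX4⟩ := exists_subsuperset_card_eq (s := nbv G v) (t := univ.erase v) (n := 4)
    (by intro w hw; exact mem_erase.2 ⟨(mem_nbv.1 hw).ne', mem_univ w⟩)
    (by rw [card_nbv hreg]; omega)
    (by rw [card_erase_of_mem (mem_univ v), card_univ]; omega)
  obtain ⟨M, hM⟩ := hpm (X : Set V) (by rw [Set.ncard_coe_finset, hX4])
  have hv : v ∉ X := fun hc => (mem_erase.1 (hX2 hc)).1 rfl
  have hv' : v ∈ ((X : Set V)ᶜ) := by simpa using hv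
  obtain ⟨w, hw, -⟩ := hM.1 (hM.2 ⟨v, hv'⟩)
  have h1 : G.Adj v w.1 := by simpa using hw.adj_sub
  exact w.2 (mem_coe.2 (hX1 (mem_nbv.2 h1)))

end FC

/-- A connected vertex-transitive non-bipartite simple graph of
even order at least 6 with common degree `k` is 4-factor-critical iff `k ≥ 5`. -/
theorem statement0 {V : Type*} [Fintype V] [DecidableEq V]
    (G : SimpleGraph V) [DecidableRel G.Adj] (k : ℕ)
    (hconn : G.Connected) (hvt : VertexTransitive G) (hnb : ¬ G.Colorable 2)
    (heven : Even (Fintype.card V)) (hcard : 6 ≤ Fintype.card V)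
    (hreg : G.IsRegularOfDegree k) :
    PFactorCritical G 4 ↔ 5 ≤ k := by
  constructor
  · intro h
    exact FC.backward hreg hcard h
  · intro hk X hX
    refine FC.forward (k := k) ⟨hconn, ?_, hreg, hk, hnb, heven⟩ X hX
    intro x y
    obtain ⟨φ, hφ⟩ := hvt x y
    exact ⟨φ.toEquiv, fun a b => φ.map_rel_iff, hφ⟩
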